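/- The following conditions are equivalent: (1) the process (e^{-rt}c(t))_{t∈[0,T]} is a strict (F_t)-submartingale under Q_BS; (2) there exists a strictly positive process (G(t))_{t∈[0,T]} with G(0)=1, all paths non-increasing and continuous, which is a strict (F_t)-supermartingale under Q_BS and such that (e^{-rt}c(t)G(t))_{t∈[0,T]} is an (F_t)-martingale under Q_BS. Moreover, a process G as in (2), if it exists, is unique up to indistinguishability (two processes being indistinguishable if almost surely they agree for all t ∈ [0,T]). -/

import Mathlib

open MeasureTheory ProbabilityTheory

/-- The natural filtration of a real-valued process `W`. -/
def natFilt {Ω : Type*} (W : ℝ → Ω → ℝ) (t : ℝ) : MeasurableSpace Ω :=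
  ⨆ u ∈ Set.Icc (0 : ℝ) t, MeasurableSpace.comap (W u) inferInstance

/-- The σ-algebra generated by the `P`-null sets. -/
def sigmaNull {Ω : Type*} [MeasurableSpace Ω] (P : Measure Ω) : MeasurableSpace Ω :=
  MeasurableSpace.generateFrom {A | MeasurableSet A ∧ P A = 0}

/-- `W` is a standard Brownian motion under `P`: measurable, starting at `0`, with
continuous paths, Gaussian increments `W_t − W_s ∼ N(0, t−s)`, and increments independent
of the past. -/
def IsStdBM {Ω : Type*} [MeasurableSpace Ω] (P : Measure Ω) (W : ℝ → Ω → ℝ) : Prop :=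
  (∀ t : ℝ, Measurable (W t)) ∧
  (∀ ω, W 0 ω = 0) ∧
  (∀ ω, Continuous fun t => W t ω) ∧
  (∀ s t : ℝ, 0 ≤ s → s ≤ t →
    Measure.map (fun ω => W t ω - W s ω) P = gaussianReal 0 (t - s).toNNReal) ∧
  (∀ s t : ℝ, 0 ≤ s → s ≤ t →
    Indep (MeasurableSpace.comap (fun ω => W t ω - W s ω) inferInstance) (natFilt W s) P)

/-- `X` is a strict `(F_t)_{t∈[0,T]}`-submartingale under `Q`. -/
def StrictSubmartingaleOn {Ω : Type*} [MeasurableSpace Ω] (F : ℝ → MeasurableSpace Ω)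
    (Q : Measure Ω) (X : ℝ → Ω → ℝ) (T : ℝ) : Prop :=
  (∀ t ∈ Set.Icc (0 : ℝ) T, Measurable[F t] (X t) ∧ Integrable (X t) Q) ∧
  ∀ s t : ℝ, 0 ≤ s → s < t → t ≤ T → ∀ᵐ ω ∂Q, X s ω < (Q[X t | F s]) ω

/-- `X` is a strict `(F_t)_{t∈[0,T]}`-supermartingale under `Q`. -/
def StrictSupermartingaleOn {Ω : Type*} [MeasurableSpace Ω] (F : ℝ → MeasurableSpace Ω)
    (Q : Measure Ω) (X : ℝ → Ω → ℝ) (T : ℝ) : Prop :=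
  (∀ t ∈ Set.Icc (0 : ℝ) T, Measurable[F t] (X t) ∧ Integrable (X t) Q) ∧
  ∀ s t : ℝ, 0 ≤ s → s < t → t ≤ T → ∀ᵐ ω ∂Q, (Q[X t | F s]) ω < X s ω

/-- `X` is an `(F_t)_{t∈[0,T]}`-martingale under `Q`. -/
def MartingaleOn {Ω : Type*} [MeasurableSpace Ω] (F : ℝ → MeasurableSpace Ω)
    (Q : Measure Ω) (X : ℝ → Ω → ℝ) (T : ℝ) : Prop :=
  (∀ t ∈ Set.Icc (0 : ℝ) T, Measurable[F t] (X t) ∧ Integrable (X t) Q) ∧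
  ∀ s t : ℝ, 0 ≤ s → s ≤ t → t ≤ T → Q[X t | F s] =ᵐ[Q] X s

/-- The property required of the process `G` in condition (2) of STATEMENT 0: strictly
positive, `G(0) = 1`, all paths non-increasing and continuous on `[0,T]`, a strict
`(F_t)`-supermartingale under `Q_BS`, and such that `(e^{-rt}c(t)G(t))_{t∈[0,T]}` is an
`(F_t)`-martingale under `Q_BS`. -/
def GoodSurvival {Ω : Type*} [MeasurableSpace Ω] (F : ℝ → MeasurableSpace Ω)
    (Q_BS : Measure Ω) (c : ℝ → Ω → ℝ) (r T : ℝ) (G : ℝ → Ω → ℝ) : Prop :=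
  (∀ t ∈ Set.Icc (0 : ℝ) T, ∀ ω, 0 < G t ω) ∧
  (∀ ω, G 0 ω = 1) ∧
  (∀ ω, AntitoneOn (fun t => G t ω) (Set.Icc (0 : ℝ) T)) ∧
  (∀ ω, ContinuousOn (fun t => G t ω) (Set.Icc (0 : ℝ) T)) ∧
  StrictSupermartingaleOn F Q_BS G T ∧
  MartingaleOn F Q_BS (fun t ω => Real.exp (-(r * t)) * c t ω * G t ω) T

/-!
Let `X` be the discounted value process. If `X * H` and `X * K` are martingales for positive
non-increasing `H`, `K` started at `1`, then `H / (H + K)` is a martingale under the weight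
`X * (H + K)`; its increments are orthogonal, which bounds the `X`-weighted `L²` distance of `H`
and `K` at a fixed time by the quadratic variations of `H` and `K`. Non-increasing continuous
paths have zero quadratic variation, hence uniqueness. In discrete time a positive submartingale
has a predictable multiplicative Doob compensator, whose expected quadratic variation along a
dyadic grid is controlled by the oscillation of `X`; the same bound then makes the dyadic
compensators a Cauchy sequence, and their limit is continuous and turns `X` into a martingale.

As `X t > 0`, the variables `G s - G t ≥ 0` and `X t * (G s - G t) ≥ 0` vanish together, so their
conditional expectations given the information at time `s` are positive almost surely at the same
time. The latter is the conditional gain of `X` times `G s`, whence the equivalence of the two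
strictness conditions.
-/

section CondExp

variable {Ω : Type*} {m m0 : MeasurableSpace Ω} {μ : Measure Ω} {f g Z : Ω → ℝ}

theorem integral_condExp_mul (hm : m ≤ m0) [SigmaFinite (μ.trim hm)] (hf : Integrable f μ)
    (hZ : StronglyMeasurable[m] Z) (hfZ : Integrable (f * Z) μ) :
    ∫ ω, (μ[f | m]) ω * Z ω ∂μ = ∫ ω, f ω * Z ω ∂μ :=
  calc ∫ ω, (μ[f | m]) ω * Z ω ∂μ
      = ∫ ω, (μ[f * Z | m]) ω ∂μ :=
        integral_congr_ae (condExp_mul_of_stronglyMeasurable_right hZ hfZ hf).symm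
    _ = ∫ ω, f ω * Z ω ∂μ := integral_condExp hm

theorem integral_mul_eq_of_martingale {ι : Type*} [Preorder ι] {ℱ : Filtration ι m0}
    [SigmaFiniteFiltration μ ℱ] {M : ι → Ω → ℝ} (hM : Martingale M ℱ μ) {i j : ι} (hij : i ≤ j)
    (hZ : StronglyMeasurable[ℱ i] Z) (hMZ : Integrable (M j * Z) μ) :
    ∫ ω, M j ω * Z ω ∂μ = ∫ ω, M i ω * Z ω ∂μ := by
  rw [← integral_condExp_mul (ℱ.le i) (hM.integrable j) hZ hMZ]
  refine integral_congr_ae ?_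
  filter_upwards [hM.condExp_ae_eq hij] with ω h
  rw [h]

theorem condExp_pos_of_condExp_pos (hm : m ≤ m0) [SigmaFinite (μ.trim hm)]
    (hf : Integrable f μ) (hg : Integrable g μ) (hg0 : ∀ᵐ ω ∂μ, 0 ≤ g ω)
    (hfg : ∀ᵐ ω ∂μ, g ω = 0 → f ω = 0) (hpos : ∀ᵐ ω ∂μ, 0 < (μ[f | m]) ω) :
    ∀ᵐ ω ∂μ, 0 < (μ[g | m]) ω := by
  set B : Set Ω := {ω | (μ[g | m]) ω ≤ 0}
  have hBm : MeasurableSet[m] B :=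
    stronglyMeasurable_condExp.measurableSet_le stronglyMeasurable_const
  have hB : MeasurableSet B := hm _ hBm
  have hgB : ∀ᵐ ω ∂μ.restrict B, g ω = 0 := by
    have hle : ∫ ω in B, g ω ∂μ ≤ 0 := by
      rw [← setIntegral_condExp hm hg hBm]
      exact setIntegral_nonpos hB fun _ h => h
    have h0 := ae_restrict_of_ae (s := B) hg0
    exact (integral_eq_zero_iff_of_nonneg_ae h0 hg.integrableOn).1
      (hle.antisymm (integral_nonneg_of_ae h0))
  have hfB : ∫ ω in B, (μ[f | m]) ω ∂μ = 0 := by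
    rw [setIntegral_condExp hm hf hBm]
    refine integral_eq_zero_of_ae ?_
    filter_upwards [hgB, ae_restrict_of_ae hfg] with ω h h' using h' h
  have hBpos := ae_restrict_of_ae (s := B) hpos
  have hfalse : ∀ᵐ _ ∂μ.restrict B, False := by
    filter_upwards [hBpos, (integral_eq_zero_iff_of_nonneg_ae (hBpos.mono fun _ h => h.le)
      integrable_condExp.integrableOn).1 hfB] with ω h h' using h.ne' h'
  filter_upwards [(ae_restrict_iff' hB).1 hfalse] with ω h using not_le.1 h

end CondExp

section AlmostEverywhere

variable {Ω : Type*} [MeasurableSpace Ω] {μ : Measure Ω}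

theorem integrable_mul_of_mem_Icc {f g : Ω → ℝ} (hf : Integrable f μ) (hg : StronglyMeasurable g)
    (hg01 : ∀ ω, g ω ∈ Set.Icc 0 1) : Integrable (fun ω => f ω * g ω) μ :=
  hf.mul_bdd (c := 1) hg.aestronglyMeasurable
    (ae_of_all _ fun ω => (Real.norm_of_nonneg (hg01 ω).1).trans_le (hg01 ω).2)

variable {f : ℕ → Ω → ℝ}

theorem ae_summable_of_summable_integral (hf : ∀ k, Integrable (f k) μ)
    (hf0 : ∀ k, ∀ᵐ ω ∂μ, 0 ≤ f k ω) (hsum : Summable fun k => ∫ ω, f k ω ∂μ) :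
    ∀ᵐ ω ∂μ, Summable fun k => f k ω := by
  have hlt : ∫⁻ ω, ∑' k, ENNReal.ofReal (f k ω) ∂μ ≠ ⊤ := by
    rw [lintegral_tsum fun k => (hf k).aemeasurable.ennreal_ofReal]
    simp_rw [← fun k => ofReal_integral_eq_lintegral_ofReal (hf k) (hf0 k)]
    exact hsum.tsum_ofReal_ne_top
  filter_upwards [ae_lt_top' (AEMeasurable.tsum fun k =>
    (hf k).aemeasurable.ennreal_ofReal) hlt, ae_all_iff.2 hf0] with ω hω h0
  simpa only [ENNReal.toReal_ofReal (h0 _)] using ENNReal.summable_toReal hω.ne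

theorem ae_frequently_le_of_integral_le (hf : ∀ k, Integrable (f k) μ)
    (hfm : ∀ k, Measurable (f k)) (hf0 : ∀ k, ∀ᵐ ω ∂μ, 0 ≤ f k ω) {C : ℝ}
    (hC : ∀ k, ∫ ω, f k ω ∂μ ≤ C) :
    ∀ᵐ ω ∂μ, ∃ c, ∃ᶠ k in Filter.atTop, f k ω ≤ c := by
  have hbdd : ∀ k, eLpNorm (f k) 1 μ ≤ C.toNNReal := fun k => by
    rw [eLpNorm_one_eq_lintegral_enorm, ← ofReal_integral_norm_eq_lintegral_enorm (hf k)]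
    refine ENNReal.ofReal_le_ofReal (le_trans (le_of_eq ?_) (hC k))
    exact integral_congr_ae ((hf0 k).mono fun ω h => Real.norm_of_nonneg h)
  filter_upwards [ae_bdd_liminf_atTop_of_eLpNorm_bdd one_ne_zero hfm hbdd] with ω hω
  obtain ⟨c, hc, hc'⟩ := exists_between hω
  refine ⟨c.toReal, (Filter.frequently_lt_of_liminf_lt (by isBoundedDefault) hc).mono
    fun k hk => (le_abs_self _).trans ?_⟩
  have hle := ENNReal.toReal_mono hc'.ne hk.le
  rwa [toReal_enorm, Real.norm_eq_abs] at hle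

end AlmostEverywhere

section MulCompensator

variable {Ω ι κ : Type*} {mΩ : MeasurableSpace Ω} {μ : Measure Ω}

/-- The filtration `ℱ` observed only along the monotone time change `φ`. -/
def reindexFiltration [Preorder ι] [Preorder κ] (ℱ : Filtration ι mΩ) {φ : κ → ι}
    (hφ : Monotone φ) : Filtration κ mΩ where
  seq k := ℱ (φ k)
  mono' := ℱ.mono'.comp hφ
  le' k := ℱ.le (φ k)

/-- `G` is a multiplicative compensator of `X`: a positive non-increasing adapted process started
at `1` which turns `X` into the martingale `X * G`. Predictability is not part of the notion; in
continuous time it is replaced by continuity of the paths of `G`. -/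
structure IsMulCompensator [Preorder ι] [OrderBot ι] (X G : ι → Ω → ℝ) (ℱ : Filtration ι mΩ)
    (μ : Measure Ω) : Prop where
  pos : ∀ i ω, 0 < G i ω
  bot_eq_one : ∀ ω, G ⊥ ω = 1
  antitone : ∀ ω, Antitone fun i => G i ω
  stronglyAdapted : StronglyAdapted ℱ G
  martingale : Martingale (X * G) ℱ μ

namespace IsMulCompensator

variable [Preorder ι] [OrderBot ι] {X G H : ι → Ω → ℝ} {ℱ : Filtration ι mΩ}

theorem le_one (hG : IsMulCompensator X G ℱ μ) (i : ι) (ω : Ω) : G i ω ≤ 1 :=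
  hG.bot_eq_one ω ▸ hG.antitone ω bot_le

theorem integrable_mul (hG : IsMulCompensator X G ℱ μ) {f : Ω → ℝ} (hf : Integrable f μ) (i : ι) :
    Integrable (fun ω => f ω * G i ω) μ :=
  integrable_mul_of_mem_Icc hf ((hG.stronglyAdapted i).mono (ℱ.le i))
    fun ω => ⟨(hG.pos i ω).le, hG.le_one i ω⟩

theorem integrable [IsFiniteMeasure μ] (hG : IsMulCompensator X G ℱ μ) (i : ι) :
    Integrable (G i) μ := by
  simpa only [one_mul] using hG.integrable_mul (integrable_const (1 : ℝ)) i

theorem integrable_mul_sub (hG : IsMulCompensator X G ℱ μ) {f : Ω → ℝ} (hf : Integrable f μ)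
    (i j : ι) : Integrable (fun ω => f ω * (G i ω - G j ω)) μ :=
  ((hG.integrable_mul hf i).sub (hG.integrable_mul hf j)).congr
    (ae_of_all _ fun _ => (mul_sub _ _ _).symm)

theorem integrable_mul_sq_sub (hG : IsMulCompensator X G ℱ μ) (hH : IsMulCompensator X H ℱ μ)
    {f : Ω → ℝ} (hf : Integrable f μ) (i : ι) :
    Integrable (fun ω => f ω * (G i ω - H i ω) ^ 2) μ := by
  refine integrable_mul_of_mem_Icc hf
    ((((hG.stronglyAdapted i).sub (hH.stronglyAdapted i)).mono (ℱ.le i)).pow 2)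
    fun ω => ⟨sq_nonneg _, (sq_le_one_iff_abs_le_one _).2 (abs_sub_le_iff.2 ⟨?_, ?_⟩)⟩
  · linarith [hG.le_one i ω, hH.pos i ω]
  · linarith [hH.le_one i ω, hG.pos i ω]

theorem reindex [Preorder κ] [OrderBot κ] (hG : IsMulCompensator X G ℱ μ) {φ : κ → ι}
    (hφ : Monotone φ) (hbot : φ ⊥ = ⊥) :
    IsMulCompensator (fun k => X (φ k)) (fun k => G (φ k)) (reindexFiltration ℱ hφ) μ where
  pos k := hG.pos (φ k)
  bot_eq_one ω := hbot ▸ hG.bot_eq_one ω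
  antitone ω := (hG.antitone ω).comp_monotone hφ
  stronglyAdapted k := hG.stronglyAdapted (φ k)
  martingale := ⟨fun k => hG.martingale.1 (φ k), fun _ _ h => hG.martingale.2 _ _ (hφ h)⟩

end IsMulCompensator

end MulCompensator

section Orthogonality

variable {Ω ι : Type*} {mΩ : MeasurableSpace Ω} {μ : Measure Ω}

theorem integral_mul_sq_sub_of_martingale [Preorder ι] {ℱ : Filtration ι mΩ}
    [SigmaFiniteFiltration μ ℱ] {M D : ι → Ω → ℝ} {C : ℝ} (hM : Martingale M ℱ μ)
    (hMD : Martingale (M * D) ℱ μ) (hD : StronglyAdapted ℱ D) (hDC : ∀ i ω, |D i ω| ≤ C)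
    {i j : ι} (hij : i ≤ j) :
    ∫ ω, M j ω * (D j ω - D i ω) ^ 2 ∂μ
      = ∫ ω, M j ω * D j ω ^ 2 ∂μ - ∫ ω, M i ω * D i ω ^ 2 ∂μ := by
  have hDm (k : ι) : AEStronglyMeasurable (D k) μ := ((hD k).mono (ℱ.le k)).aestronglyMeasurable
  have hbdd {f : Ω → ℝ} (hf : Integrable f μ) (k : ι) : Integrable (fun ω => f ω * D k ω) μ :=
    hf.mul_bdd (hDm k) (ae_of_all _ (hDC k))
  have hint (k l : ι) : Integrable (fun ω => M j ω * D k ω * D l ω) μ :=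
    hbdd (hbdd (hM.integrable j) k) l
  have hcross : ∫ ω, M j ω * D j ω * D i ω ∂μ = ∫ ω, M i ω * D i ω * D i ω ∂μ :=
    integral_mul_eq_of_martingale hMD hij (hD i) (hint j i)
  have hsq : ∫ ω, M j ω * (D i ω * D i ω) ∂μ = ∫ ω, M i ω * (D i ω * D i ω) ∂μ :=
    integral_mul_eq_of_martingale hM hij ((hD i).mul (hD i))
      ((hint i i).congr (ae_of_all _ fun ω => mul_assoc _ _ _))
  have hsub : Integrable (fun ω => M j ω * D j ω * D j ω - 2 * (M j ω * D j ω * D i ω)) μ :=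
    (hint j j).sub ((hint j i).const_mul 2)
  calc ∫ ω, M j ω * (D j ω - D i ω) ^ 2 ∂μ
      = ∫ ω, (M j ω * D j ω * D j ω - 2 * (M j ω * D j ω * D i ω)
          + M j ω * D i ω * D i ω) ∂μ := by congr with ω; ring
    _ = ∫ ω, M j ω * D j ω * D j ω ∂μ - 2 * ∫ ω, M j ω * D j ω * D i ω ∂μ
          + ∫ ω, M j ω * D i ω * D i ω ∂μ := by
        rw [integral_add hsub (hint i i), integral_sub (hint j j) ((hint j i).const_mul 2),
          integral_const_mul]
    _ = ∫ ω, M j ω * D j ω ^ 2 ∂μ - ∫ ω, M i ω * D i ω ^ 2 ∂μ := by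
        simp only [pow_two, mul_assoc] at hcross hsq ⊢
        rw [hcross, hsq]
        ring

theorem integral_mul_sq_sub_zero_eq_sum [IsFiniteMeasure μ] {ℱ : Filtration ℕ mΩ}
    {M D : ℕ → Ω → ℝ} {C : ℝ} (hM : Martingale M ℱ μ) (hMD : Martingale (M * D) ℱ μ)
    (hD : StronglyAdapted ℱ D) (hDC : ∀ i ω, |D i ω| ≤ C) (k : ℕ) :
    ∫ ω, M k ω * (D k ω - D 0 ω) ^ 2 ∂μ
      = ∑ i ∈ Finset.range k, ∫ ω, M (i + 1) ω * (D (i + 1) ω - D i ω) ^ 2 ∂μ := by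
  rw [integral_mul_sq_sub_of_martingale hM hMD hD hDC k.zero_le,
    ← Finset.sum_range_sub fun i => ∫ ω, M i ω * D i ω ^ 2 ∂μ]
  exact Finset.sum_congr rfl fun i _ =>
    (integral_mul_sq_sub_of_martingale hM hMD hD hDC i.le_succ).symm

end Orthogonality

section SqVar

theorem add_mul_sq_div_add_sub_div_add_le {a b a' b' : ℝ} (ha' : 0 < a') (hb' : 0 < b')
    (ha : a' ≤ a) (hb : b' ≤ b) :
    (a' + b') * (a' / (a' + b') - a / (a + b)) ^ 2 ≤ (a - a') ^ 2 / a + (b - b') ^ 2 / b := by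
  have ha0 : 0 < a := ha'.trans_le ha
  have hb0 : 0 < b := hb'.trans_le hb
  set x := a - a'
  set y := b - b'
  have hcross : a' * b - a * b' = a' * y - b' * x := by simp only [x, y]; ring
  calc (a' + b') * (a' / (a' + b') - a / (a + b)) ^ 2
      = (a' * b - a * b') ^ 2 / ((a' + b') * (a + b) ^ 2) := by field_simp; ring
    _ ≤ (a' + b') * (a' * y ^ 2 + b' * x ^ 2) / ((a' + b') * (a + b) ^ 2) := by
        rw [hcross]
        gcongr
        nlinarith [mul_nonneg (mul_pos ha' hb').le (sq_nonneg (x + y))]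
    _ = a' / (a + b) ^ 2 * y ^ 2 + b' / (a + b) ^ 2 * x ^ 2 := by field_simp
    _ ≤ 1 / b * y ^ 2 + 1 / a * x ^ 2 := by
        gcongr ?_ * _ + ?_ * _ <;> rw [div_le_div_iff₀ (by positivity) (by positivity)] <;>
          nlinarith [mul_pos ha0 hb0]
    _ = x ^ 2 / a + y ^ 2 / b := by ring

theorem sq_sub_le_mul_sq_div_add_sub_half {a b : ℝ} (ha : 0 < a) (hb : 0 < b) (ha1 : a ≤ 1)
    (hb1 : b ≤ 1) : (a - b) ^ 2 ≤ 8 * ((a + b) * (a / (a + b) - 1 / 2) ^ 2) :=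
  calc (a - b) ^ 2 ≤ 2 * ((a - b) ^ 2 / (a + b)) := by
        rw [← mul_div_assoc, le_div_iff₀ (by positivity)]
        nlinarith [sq_nonneg (a - b)]
    _ = 8 * ((a + b) * (a / (a + b) - 1 / 2) ^ 2) := by field_simp; ring

theorem sq_sub_div_le_sub {a b : ℝ} (hb : 0 < b) (hba : b ≤ a) : (a - b) ^ 2 / a ≤ a - b := by
  rw [div_le_iff₀ (hb.trans_le hba)]
  nlinarith

variable {Ω : Type*}

/-- The quadratic variation of `K` up to time `k`, weighted by `X` and normalised by `K`: the
energy that controls the distance between two multiplicative compensators of `X`. -/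
noncomputable def sqVar (X K : ℕ → Ω → ℝ) (k : ℕ) (ω : Ω) : ℝ :=
  ∑ i ∈ Finset.range k, X (i + 1) ω * ((K i ω - K (i + 1) ω) ^ 2 / K i ω)

theorem sqVar_le_mul_sub {X K : ℕ → Ω → ℝ} {ω : Ω} {y : ℝ} (hX : ∀ i, X i ω ≤ y)
    (hX0 : ∀ i, 0 ≤ X i ω) (hK0 : ∀ i, 0 < K i ω) (hK : Antitone fun i => K i ω) (k : ℕ) :
    sqVar X K k ω ≤ y * (K 0 ω - K k ω) := by
  rw [← Finset.sum_range_sub' (fun i => K i ω), Finset.mul_sum]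
  exact Finset.sum_le_sum fun i _ => mul_le_mul (hX _)
    (sq_sub_div_le_sub (hK0 _) (hK i.le_succ)) (div_nonneg (sq_nonneg _) (hK0 i).le)
    ((hX0 i).trans (hX i))

theorem sqVar_mem_Icc {X K : ℕ → Ω → ℝ} {ω : Ω} {y : ℝ} (hX : ∀ i, X i ω ∈ Set.Icc 0 y)
    (hK01 : ∀ i, K i ω ∈ Set.Ioc 0 1) (hK : Antitone fun i => K i ω) (k : ℕ) :
    sqVar X K k ω ∈ Set.Icc 0 y := by
  refine ⟨Finset.sum_nonneg fun i _ => mul_nonneg (hX _).1 (div_nonneg (sq_nonneg _) (hK01 i).1.le),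
    (sqVar_le_mul_sub (fun i => (hX i).2) (fun i => (hX i).1) (fun i => (hK01 i).1) hK k).trans
      (mul_le_of_le_one_right ((hX 0).1.trans (hX 0).2) ?_)⟩
  linarith [(hK01 0).2, (hK01 k).1]

variable {mΩ : MeasurableSpace Ω} {μ : Measure Ω} {ℱ : Filtration ℕ mΩ} {X H K : ℕ → Ω → ℝ}

namespace IsMulCompensator

theorem sq_sub_div_mem_Icc (hK : IsMulCompensator X K ℱ μ) {i j : ℕ} (hij : i ≤ j) (ω : Ω) :
    (K i ω - K j ω) ^ 2 / K i ω ∈ Set.Icc 0 1 :=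
  ⟨div_nonneg (sq_nonneg _) (hK.pos i ω).le,
    (sq_sub_div_le_sub (hK.pos j ω) (hK.antitone ω hij)).trans
      (by linarith [hK.le_one i ω, hK.pos j ω])⟩

theorem integrable_mul_sq_sub_div (hK : IsMulCompensator X K ℱ μ) (hX : ∀ i, Integrable (X i) μ)
    {i j : ℕ} (hij : i ≤ j) :
    Integrable (fun ω => X j ω * ((K i ω - K j ω) ^ 2 / K i ω)) μ := by
  have hKm (l : ℕ) : StronglyMeasurable (K l) := (hK.stronglyAdapted l).mono (ℱ.le l)
  exact integrable_mul_of_mem_Icc (hX j) ((((hKm i).sub (hKm j)).pow 2).div₀ (hKm i)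
    fun ω => (hK.pos i ω).ne') (hK.sq_sub_div_mem_Icc hij)

theorem integrable_sqVar (hK : IsMulCompensator X K ℱ μ) (hX : ∀ i, Integrable (X i) μ) (k : ℕ) :
    Integrable (sqVar X K k) μ :=
  integrable_finsetSum _ fun i _ => hK.integrable_mul_sq_sub_div hX i.le_succ

theorem div_add_mem_Icc (hH : IsMulCompensator X H ℱ μ) (hK : IsMulCompensator X K ℱ μ) (i : ℕ)
    (ω : Ω) : (H / (H + K)) i ω ∈ Set.Icc 0 1 := by
  have hH0 := hH.pos i ω
  have hK0 := hK.pos i ω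
  exact ⟨div_nonneg hH0.le (add_pos hH0 hK0).le, div_le_one_of_le₀ (le_add_of_nonneg_right hK0.le)
    (add_pos hH0 hK0).le⟩

theorem stronglyAdapted_div_add (hH : IsMulCompensator X H ℱ μ) (hK : IsMulCompensator X K ℱ μ) :
    StronglyAdapted ℱ (H / (H + K)) := fun i =>
  (hH.stronglyAdapted i).div₀ ((hH.stronglyAdapted i).add (hK.stronglyAdapted i))
    fun ω => (add_pos (hH.pos i ω) (hK.pos i ω)).ne'

theorem integrable_mul_sq_div_add_sub_half (hH : IsMulCompensator X H ℱ μ)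
    (hK : IsMulCompensator X K ℱ μ) (k : ℕ) :
    Integrable (fun ω => (X * (H + K)) k ω * ((H / (H + K)) k ω - 1 / 2) ^ 2) μ := by
  have hM := (hH.martingale.add hK.martingale).integrable k
  rw [← mul_add] at hM
  have hD := ((hH.stronglyAdapted_div_add hK) k).mono (ℱ.le k)
  refine integrable_mul_of_mem_Icc hM ((hD.sub stronglyMeasurable_const).pow 2)
    fun ω => ⟨sq_nonneg _, ?_⟩
  obtain ⟨h0, h1⟩ := hH.div_add_mem_Icc hK k ω
  change ((H / (H + K)) k ω - 1 / 2) ^ 2 ≤ 1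
  nlinarith

/-- Under the weight `X * (H + K)` the ratio `H / (H + K)` is a bounded martingale started at
`1 / 2`, so its increments are orthogonal. -/
theorem integral_mul_sq_div_add_sub_half [IsFiniteMeasure μ] (hH : IsMulCompensator X H ℱ μ)
    (hK : IsMulCompensator X K ℱ μ) (k : ℕ) :
    ∫ ω, (X * (H + K)) k ω * ((H / (H + K)) k ω - 1 / 2) ^ 2 ∂μ
      = ∑ i ∈ Finset.range k, ∫ ω, (X * (H + K)) (i + 1) ω
          * ((H / (H + K)) (i + 1) ω - (H / (H + K)) i ω) ^ 2 ∂μ := by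
  have hM : Martingale (X * (H + K)) ℱ μ := mul_add X H K ▸ hH.martingale.add hK.martingale
  have hMD : X * (H + K) * (H / (H + K)) = X * H := by
    ext i ω
    have := (add_pos (hH.pos i ω) (hK.pos i ω)).ne'
    simp only [Pi.mul_apply, Pi.add_apply, Pi.div_apply]
    field_simp
  have hhalf (ω : Ω) : (H / (H + K)) 0 ω = 1 / 2 := by
    have hH0 : H 0 ω = 1 := hH.bot_eq_one ω
    have hK0 : K 0 ω = 1 := hK.bot_eq_one ω
    simp only [Pi.div_apply, Pi.add_apply, hH0, hK0]
    norm_num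
  rw [← integral_mul_sq_sub_zero_eq_sum (C := 1) hM (hMD.symm ▸ hH.martingale)
    (hH.stronglyAdapted_div_add hK) (fun i ω => abs_le.2 ?_)]
  · simp only [hhalf]
  · obtain ⟨h0, h1⟩ := hH.div_add_mem_Icc hK i ω
    exact ⟨by linarith, h1⟩

theorem integral_mul_sq_sub_le [IsFiniteMeasure μ] (hH : IsMulCompensator X H ℱ μ)
    (hK : IsMulCompensator X K ℱ μ) (hX : ∀ i, Integrable (X i) μ) (hX0 : ∀ i ω, 0 ≤ X i ω)
    (k : ℕ) :
    ∫ ω, X k ω * (H k ω - K k ω) ^ 2 ∂μ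
      ≤ 8 * (∫ ω, sqVar X H k ω ∂μ + ∫ ω, sqVar X K k ω ∂μ) := by
  have hHint (i : ℕ) := hH.integrable_mul_sq_sub_div hX i.le_succ
  have hKint (i : ℕ) := hK.integrable_mul_sq_sub_div hX i.le_succ
  calc ∫ ω, X k ω * (H k ω - K k ω) ^ 2 ∂μ
      ≤ ∫ ω, 8 * ((X * (H + K)) k ω * ((H / (H + K)) k ω - 1 / 2) ^ 2) ∂μ := by
        refine integral_mono_of_nonneg (ae_of_all _ fun ω => mul_nonneg (hX0 k ω) (sq_nonneg _))
          ((hH.integrable_mul_sq_div_add_sub_half hK k).const_mul 8) (ae_of_all _ fun ω => ?_)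
        have := mul_le_mul_of_nonneg_left (sq_sub_le_mul_sq_div_add_sub_half (hH.pos k ω)
          (hK.pos k ω) (hH.le_one k ω) (hK.le_one k ω)) (hX0 k ω)
        simp only [Pi.mul_apply, Pi.add_apply, Pi.div_apply]
        linarith
    _ = 8 * ∑ i ∈ Finset.range k, ∫ ω, (X * (H + K)) (i + 1) ω
          * ((H / (H + K)) (i + 1) ω - (H / (H + K)) i ω) ^ 2 ∂μ := by
        rw [integral_const_mul, hH.integral_mul_sq_div_add_sub_half hK]
    _ ≤ 8 * ∑ i ∈ Finset.range k, ∫ ω, (X (i + 1) ω * ((H i ω - H (i + 1) ω) ^ 2 / H i ω)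
          + X (i + 1) ω * ((K i ω - K (i + 1) ω) ^ 2 / K i ω)) ∂μ := by
        refine mul_le_mul_of_nonneg_left (Finset.sum_le_sum fun i _ => ?_) (by norm_num)
        refine integral_mono_of_nonneg (ae_of_all _ fun ω => mul_nonneg (mul_nonneg (hX0 _ ω)
          (add_pos (hH.pos _ ω) (hK.pos _ ω)).le) (sq_nonneg _)) ((hHint i).add (hKint i))
          (ae_of_all _ fun ω => ?_)
        have := mul_le_mul_of_nonneg_left (add_mul_sq_div_add_sub_div_add_le (hH.pos (i + 1) ω)
          (hK.pos (i + 1) ω) (hH.antitone ω i.le_succ) (hK.antitone ω i.le_succ)) (hX0 (i + 1) ω)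
        simp only [Pi.mul_apply, Pi.add_apply, Pi.div_apply]
        linarith
    _ = 8 * (∫ ω, sqVar X H k ω ∂μ + ∫ ω, sqVar X K k ω ∂μ) := by
        simp only [sqVar, integral_finsetSum _ fun i _ => hHint i,
          integral_finsetSum _ fun i _ => hKint i, ← Finset.sum_add_distrib,
          fun i => integral_add (hHint i) (hKint i)]

end IsMulCompensator

end SqVar

section PredictableEnergy

theorem sq_sub_le_two_mul_sum_Ico {u : ℕ → ℝ} {a b : ℕ} (hab : a ≤ b) :
    (u a - u b) ^ 2 ≤ 2 * ∑ j ∈ Finset.Ico a b, (u j - u (j + 1)) * (u j - u b) := by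
  have hstep (j : ℕ) (_ : j ∈ Finset.Ico a b) :
      -(u (j + 1) - u b) ^ 2 - -(u j - u b) ^ 2 ≤ 2 * ((u j - u (j + 1)) * (u j - u b)) := by
    nlinarith [sq_nonneg (u j - u (j + 1))]
  calc (u a - u b) ^ 2 = ∑ j ∈ Finset.Ico a b, (-(u (j + 1) - u b) ^ 2 - -(u j - u b) ^ 2) := by
        rw [Finset.sum_Ico_sub (fun j => -(u j - u b) ^ 2) hab]; ring
    _ ≤ 2 * ∑ j ∈ Finset.Ico a b, (u j - u (j + 1)) * (u j - u b) := by
        rw [Finset.mul_sum]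
        exact Finset.sum_le_sum hstep

variable {Ω : Type*} {mΩ : MeasurableSpace Ω} {μ : Measure Ω}
  {ℱ : Filtration ℕ mΩ} {X K : ℕ → Ω → ℝ}

namespace IsMulCompensator

theorem sub_div_mem_Icc (hK : IsMulCompensator X K ℱ μ) {a i j : ℕ} (hai : a ≤ i) (hij : i ≤ j)
    (ω : Ω) : (K i ω - K j ω) / K a ω ∈ Set.Icc 0 1 := by
  have hle := hK.antitone ω hai
  refine ⟨div_nonneg (sub_nonneg.2 (hK.antitone ω hij)) (hK.pos a ω).le,
    (div_le_one (hK.pos a ω)).2 ?_⟩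
  linarith [hK.pos j ω]

theorem integral_drop_le [IsFiniteMeasure μ] (hK : IsMulCompensator X K ℱ μ)
    (hpred : ∀ j, StronglyMeasurable[ℱ j] (K (j + 1))) (hX : ∀ i, Integrable (X i) μ) {a j b : ℕ}
    (haj : a ≤ j) (hjb : j < b) {w : Ω → ℝ} (hw : Integrable w μ)
    (hXw : ∀ ω, |X b ω - X j ω| ≤ w ω) :
    ∫ ω, X b ω * (K j ω - K b ω) * ((K j ω - K (j + 1) ω) / K a ω) ∂μ
      ≤ ∫ ω, w ω * (K j ω - K (j + 1) ω) ∂μ := by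
  set Z : Ω → ℝ := fun ω => (K j ω - K (j + 1) ω) / K a ω
  have hZmem (ω : Ω) : Z ω ∈ Set.Icc 0 1 := hK.sub_div_mem_Icc haj j.le_succ ω
  have hZ : StronglyMeasurable[ℱ j] Z :=
    ((hK.stronglyAdapted j).sub (hpred j)).div₀
      ((hK.stronglyAdapted a).mono (ℱ.mono haj)) fun ω => (hK.pos a ω).ne'
  have hZint {f : Ω → ℝ} (hf : Integrable f μ) : Integrable (fun ω => f ω * Z ω) μ :=
    integrable_mul_of_mem_Icc hf (hZ.mono (ℱ.le j)) hZmem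
  have hXK := hZint (hK.integrable_mul (hX b) j)
  have hM (k : ℕ) := hZint (hK.martingale.integrable k)
  have hmart : ∫ ω, X b ω * K b ω * Z ω ∂μ = ∫ ω, X j ω * K j ω * Z ω ∂μ :=
    integral_mul_eq_of_martingale hK.martingale hjb.le hZ (hM b)
  have hZK (ω : Ω) : Z ω * K j ω ≤ K j ω - K (j + 1) ω := by
    simp only [Z]
    rw [div_mul_eq_mul_div, div_le_iff₀ (hK.pos a ω)]
    exact mul_le_mul_of_nonneg_left (hK.antitone ω haj) (sub_nonneg.2 (hK.antitone ω j.le_succ))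
  calc ∫ ω, X b ω * (K j ω - K b ω) * Z ω ∂μ
      = ∫ ω, (X b ω * K j ω * Z ω - X b ω * K b ω * Z ω) ∂μ := by congr with ω; ring
    _ = ∫ ω, X b ω * K j ω * Z ω ∂μ - ∫ ω, X j ω * K j ω * Z ω ∂μ := by
        rw [← hmart]; exact integral_sub hXK (hM b)
    _ = ∫ ω, (X b ω * K j ω * Z ω - X j ω * K j ω * Z ω) ∂μ := (integral_sub hXK (hM j)).symm
    _ ≤ ∫ ω, w ω * (K j ω - K (j + 1) ω) ∂μ := by
        refine integral_mono (hXK.sub (hM j)) (hK.integrable_mul_sub hw j (j + 1)) fun ω => ?_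
        calc X b ω * K j ω * Z ω - X j ω * K j ω * Z ω
            = (X b ω - X j ω) * (Z ω * K j ω) := by ring
          _ ≤ w ω * (K j ω - K (j + 1) ω) := mul_le_mul ((le_abs_self _).trans (hXw ω)) (hZK ω)
              (mul_nonneg (hZmem ω).1 (hK.pos j ω).le) ((abs_nonneg _).trans (hXw ω))

theorem integral_mul_sq_sub_div_le [IsFiniteMeasure μ] (hK : IsMulCompensator X K ℱ μ)
    (hpred : ∀ j, StronglyMeasurable[ℱ j] (K (j + 1))) (hX : ∀ i, Integrable (X i) μ)
    (hX0 : ∀ i ω, 0 ≤ X i ω) {a b : ℕ} (hab : a ≤ b) {w : Ω → ℝ} (hw : Integrable w μ)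
    (hXw : ∀ j ∈ Finset.Ico a b, ∀ ω, |X b ω - X j ω| ≤ w ω) :
    ∫ ω, X b ω * ((K a ω - K b ω) ^ 2 / K a ω) ∂μ ≤ 2 * ∫ ω, w ω * (K a ω - K b ω) ∂μ := by
  have hdrop (j : ℕ) (hj : j ∈ Finset.Ico a b) : Integrable
      (fun ω => X b ω * (K j ω - K b ω) * ((K j ω - K (j + 1) ω) / K a ω)) μ :=
    have hKm (l : ℕ) : StronglyMeasurable (K l) := (hK.stronglyAdapted l).mono (ℱ.le l)
    integrable_mul_of_mem_Icc (hK.integrable_mul_sub (hX b) j b)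
      (((hKm j).sub (hKm (j + 1))).div₀ (hKm a) fun ω => (hK.pos a ω).ne')
      (hK.sub_div_mem_Icc (Finset.mem_Ico.1 hj).1 j.le_succ)
  calc ∫ ω, X b ω * ((K a ω - K b ω) ^ 2 / K a ω) ∂μ
      ≤ ∫ ω, 2 * ∑ j ∈ Finset.Ico a b,
          X b ω * (K j ω - K b ω) * ((K j ω - K (j + 1) ω) / K a ω) ∂μ := by
        refine integral_mono (hK.integrable_mul_sq_sub_div hX hab)
          ((integrable_finsetSum _ hdrop).const_mul 2) fun ω => ?_
        calc X b ω * ((K a ω - K b ω) ^ 2 / K a ω)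
            ≤ X b ω * ((2 * ∑ j ∈ Finset.Ico a b,
                (K j ω - K (j + 1) ω) * (K j ω - K b ω)) / K a ω) :=
              mul_le_mul_of_nonneg_left (div_le_div_of_nonneg_right
                (sq_sub_le_two_mul_sum_Ico (u := fun j => K j ω) hab) (hK.pos a ω).le) (hX0 b ω)
          _ = 2 * ∑ j ∈ Finset.Ico a b,
                X b ω * (K j ω - K b ω) * ((K j ω - K (j + 1) ω) / K a ω) := by
              rw [mul_div_assoc, Finset.sum_div, mul_left_comm, Finset.mul_sum]
              congr with j
              ring
    _ = 2 * ∑ j ∈ Finset.Ico a b,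
          ∫ ω, X b ω * (K j ω - K b ω) * ((K j ω - K (j + 1) ω) / K a ω) ∂μ := by
        rw [integral_const_mul, integral_finsetSum _ hdrop]
    _ ≤ 2 * ∑ j ∈ Finset.Ico a b, ∫ ω, w ω * (K j ω - K (j + 1) ω) ∂μ :=
        mul_le_mul_of_nonneg_left (Finset.sum_le_sum fun j hj => hK.integral_drop_le hpred hX
          (Finset.mem_Ico.1 hj).1 (Finset.mem_Ico.1 hj).2 hw (hXw j hj)) zero_le_two
    _ = 2 * ∫ ω, w ω * (K a ω - K b ω) ∂μ := by
        rw [← integral_finsetSum _ fun j _ => hK.integrable_mul_sub hw j (j + 1)]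
        congr with ω
        rw [← Finset.mul_sum, ← neg_sub (K b ω),
          ← Finset.sum_Ico_sub (fun j => K j ω) hab, ← Finset.sum_neg_distrib]
        simp only [neg_sub]

theorem integral_sqVar_comp_le [IsFiniteMeasure μ] (hK : IsMulCompensator X K ℱ μ)
    (hpred : ∀ j, StronglyMeasurable[ℱ j] (K (j + 1))) (hX : ∀ i, Integrable (X i) μ)
    (hX0 : ∀ i ω, 0 ≤ X i ω) {φ : ℕ → ℕ} (hφ : Monotone φ) {w : Ω → ℝ} (hw : Integrable w μ)
    (hw0 : ∀ ω, 0 ≤ w ω)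
    (hXw : ∀ i, ∀ j ∈ Finset.Ico (φ i) (φ (i + 1)), ∀ ω, |X (φ (i + 1)) ω - X j ω| ≤ w ω) (k : ℕ) :
    ∫ ω, sqVar (fun i => X (φ i)) (fun i => K (φ i)) k ω ∂μ ≤ 2 * ∫ ω, w ω ∂μ := by
  simp only [sqVar]
  rw [integral_finsetSum _ fun i _ => hK.integrable_mul_sq_sub_div hX (hφ i.le_succ)]
  calc ∑ i ∈ Finset.range k, ∫ ω, X (φ (i + 1)) ω
          * ((K (φ i) ω - K (φ (i + 1)) ω) ^ 2 / K (φ i) ω) ∂μ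
      ≤ ∑ i ∈ Finset.range k, 2 * ∫ ω, w ω * (K (φ i) ω - K (φ (i + 1)) ω) ∂μ :=
        Finset.sum_le_sum fun i _ =>
          hK.integral_mul_sq_sub_div_le hpred hX hX0 (hφ i.le_succ) hw (hXw i)
    _ = 2 * ∫ ω, w ω * (K (φ 0) ω - K (φ k) ω) ∂μ := by
        rw [← Finset.mul_sum, ← integral_finsetSum _ fun i _ => hK.integrable_mul_sub hw _ _]
        simp only [← Finset.mul_sum, Finset.sum_range_sub' fun i => K (φ i) _]
    _ ≤ 2 * ∫ ω, w ω ∂μ := by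
        refine mul_le_mul_of_nonneg_left (integral_mono (hK.integrable_mul_sub hw _ _) hw
          fun ω => mul_le_of_le_one_right (hw0 ω) ?_) zero_le_two
        linarith [hK.le_one (φ 0) ω, hK.pos (φ k) ω]

end IsMulCompensator

end PredictableEnergy

section MulDoob

variable {Ω : Type*} {mΩ : MeasurableSpace Ω} {μ : Measure Ω} {ℱ : Filtration ℕ mΩ}
  {X : ℕ → Ω → ℝ}

/-- The predictable multiplicative compensator of a positive submartingale in discrete time, the
multiplicative analogue of `predictablePart`. Almost surely the maximum is the conditional
expectation; taking the maximum makes every path non-increasing. -/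
noncomputable def mulDoob (X : ℕ → Ω → ℝ) (ℱ : Filtration ℕ mΩ) (μ : Measure Ω) (j : ℕ) (ω : Ω) :
    ℝ :=
  ∏ i ∈ Finset.range j, X i ω / max (X i ω) ((μ[X (i + 1) | ℱ i]) ω)

theorem mulDoob_succ (j : ℕ) (ω : Ω) : mulDoob X ℱ μ (j + 1) ω
    = mulDoob X ℱ μ j ω * (X j ω / max (X j ω) ((μ[X (j + 1) | ℱ j]) ω)) :=
  Finset.prod_range_succ _ _

theorem mulDoob_pos (hX : ∀ i ω, 0 < X i ω) (j : ℕ) (ω : Ω) : 0 < mulDoob X ℱ μ j ω :=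
  Finset.prod_pos fun i _ => div_pos (hX i ω) (lt_max_of_lt_left (hX i ω))

theorem antitone_mulDoob (hX : ∀ i ω, 0 < X i ω) (ω : Ω) :
    Antitone fun j => mulDoob X ℱ μ j ω :=
  antitone_nat_of_succ_le fun j => by
    rw [mulDoob_succ]
    exact mul_le_of_le_one_right (mulDoob_pos hX j ω).le
      ((div_le_one (lt_max_of_lt_left (hX j ω))).2 (le_max_left _ _))

theorem stronglyMeasurable_mulDoob_succ (hX : StronglyAdapted ℱ X) (hX0 : ∀ i ω, 0 < X i ω)
    (j : ℕ) : StronglyMeasurable[ℱ j] (mulDoob X ℱ μ (j + 1)) := by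
  refine Finset.stronglyMeasurable_fun_prod _ fun i hi => ?_
  have hij : ℱ i ≤ ℱ j := ℱ.mono (Nat.lt_succ_iff.1 (Finset.mem_range.1 hi))
  have hXi : StronglyMeasurable[ℱ j] (X i) := (hX i).mono hij
  have he : StronglyMeasurable[ℱ j] (μ[X (i + 1) | ℱ i]) := stronglyMeasurable_condExp.mono hij
  exact hXi.div₀ (hXi.measurable.max he.measurable).stronglyMeasurable
    fun ω => (lt_max_of_lt_left (hX0 i ω)).ne'

theorem isMulCompensator_mulDoob [IsFiniteMeasure μ] (hX : Submartingale X ℱ μ)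
    (hX0 : ∀ i ω, 0 < X i ω) : IsMulCompensator X (mulDoob X ℱ μ) ℱ μ := by
  have hadp : StronglyAdapted ℱ (mulDoob X ℱ μ) := fun j => by
    cases j with
    | zero => exact stronglyMeasurable_const
    | succ j =>
      exact (stronglyMeasurable_mulDoob_succ hX.stronglyAdapted hX0 j).mono (ℱ.mono j.le_succ)
  have hint (i j : ℕ) : Integrable (fun ω => X i ω * mulDoob X ℱ μ j ω) μ :=
    integrable_mul_of_mem_Icc (hX.integrable i) ((hadp j).mono (ℱ.le j))
      fun ω => ⟨(mulDoob_pos hX0 j ω).le, antitone_mulDoob hX0 ω j.zero_le⟩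
  refine ⟨mulDoob_pos hX0, fun ω => Finset.prod_range_zero _, antitone_mulDoob hX0, hadp,
    martingale_nat (hX.stronglyAdapted.mul hadp) (fun j => hint j j) fun j => ?_⟩
  filter_upwards [condExp_mul_of_stronglyMeasurable_right
    (stronglyMeasurable_mulDoob_succ hX.stronglyAdapted hX0 j) (hint (j + 1) (j + 1))
    (hX.integrable (j + 1)), hX.2.1 j (j + 1) j.le_succ] with ω hω hle
  have hpos := (hX0 j ω).trans_le hle
  simp only [Pi.mul_apply] at hω ⊢
  rw [hω, mulDoob_succ, max_eq_right hle]
  field_simp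

theorem exp_neg_predictablePart_div_le_mulDoob [IsFiniteMeasure μ] (hX : Submartingale X ℱ μ)
    (hX0 : ∀ i ω, 0 < X i ω) :
    ∀ᵐ ω ∂μ, ∀ δ > 0, (∀ i, δ ≤ X i ω) → ∀ j,
      Real.exp (-(predictablePart X ℱ μ j ω / δ)) ≤ mulDoob X ℱ μ j ω := by
  have hdrift : ∀ᵐ ω ∂μ, ∀ i, X i ω ≤ (μ[X (i + 1) | ℱ i]) ω ∧
      (μ[X (i + 1) - X i | ℱ i]) ω = (μ[X (i + 1) | ℱ i]) ω - X i ω := by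
    refine ae_all_iff.2 fun i => ?_
    filter_upwards [hX.2.1 i (i + 1) i.le_succ,
      condExp_sub (hX.integrable (i + 1)) (hX.integrable i) (ℱ i)] with ω hle hω
    rw [hω, Pi.sub_apply, condExp_of_stronglyMeasurable (ℱ.le i) (hX.stronglyAdapted i)
      (hX.integrable i)]
    exact ⟨hle, rfl⟩
  filter_upwards [hdrift] with ω hω δ hδ hδX j
  rw [predictablePart, Finset.sum_apply, Finset.sum_div, ← Finset.sum_neg_distrib, Real.exp_sum]
  refine Finset.prod_le_prod (fun i _ => (Real.exp_pos _).le) fun i _ => ?_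
  obtain ⟨hle, heq⟩ := hω i
  have hx := hX0 i ω
  set e := (μ[X (i + 1) | ℱ i]) ω
  rw [heq, max_eq_right hle, Real.exp_neg, ← inv_div e]
  refine inv_anti₀ (div_pos (hx.trans_le hle) hx) ?_
  calc e / X i ω = (e - X i ω) / X i ω + 1 := by field_simp; ring
    _ ≤ (e - X i ω) / δ + 1 := by gcongr; exacts [hδX i]
    _ ≤ Real.exp ((e - X i ω) / δ) := Real.add_one_le_exp _

theorem integrable_predictablePart (j : ℕ) : Integrable (predictablePart X ℱ μ j) μ :=
  integrable_finsetSum' _ fun _ _ => integrable_condExp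

theorem integral_predictablePart [IsFiniteMeasure μ] (hX : ∀ i, Integrable (X i) μ) (j : ℕ) :
    ∫ ω, predictablePart X ℱ μ j ω ∂μ = ∫ ω, X j ω ∂μ - ∫ ω, X 0 ω ∂μ := by
  simp only [predictablePart, Finset.sum_apply]
  rw [integral_finsetSum _ fun _ _ => integrable_condExp,
    ← Finset.sum_range_sub fun i => ∫ ω, X i ω ∂μ]
  refine Finset.sum_congr rfl fun i _ => ?_
  rw [integral_condExp (ℱ.le i)]
  exact integral_sub (hX (i + 1)) (hX i)

end MulDoob

section Dyadic

variable {T : ℝ} [hT : Fact (0 ≤ T)]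

variable (T) in
/-- The `j`-th point of the dyadic grid of mesh `T / 2 ^ n` on `[0, T]`. The grid is continued by
the constant value `T` for `j ≥ 2 ^ n`. -/
noncomputable def dyadic (n j : ℕ) : Set.Icc (0 : ℝ) T :=
  Set.projIcc 0 T hT.out (T * (j / 2 ^ n))

theorem monotone_dyadic (n : ℕ) : Monotone (dyadic T n) := fun _ _ h =>
  Set.monotone_projIcc _ (mul_le_mul_of_nonneg_left (by gcongr) hT.out)

@[simp]
theorem dyadic_zero (n : ℕ) : dyadic T n 0 = ⊥ := by
  rw [dyadic, Nat.cast_zero, zero_div, mul_zero]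
  exact Set.projIcc_left _

theorem dyadic_two_pow (n : ℕ) : dyadic T n (2 ^ n) = ⊤ := by
  rw [dyadic, Nat.cast_pow, Nat.cast_two, div_self (by positivity), mul_one]
  exact Set.projIcc_right _

theorem dyadic_of_two_pow_le {n j : ℕ} (h : 2 ^ n ≤ j) : dyadic T n j = ⊤ :=
  top_unique (dyadic_two_pow (T := T) n ▸ monotone_dyadic n h)

theorem dyadic_mul_two_pow {m n : ℕ} (h : m ≤ n) (i : ℕ) :
    dyadic T n (i * 2 ^ (n - m)) = dyadic T m i := by
  rw [dyadic, dyadic, ← Nat.sub_add_cancel h, Nat.add_sub_cancel, pow_add]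
  congr 2
  push_cast
  field_simp

theorem dist_dyadic_succ_le (n j : ℕ) : dist (dyadic T n j) (dyadic T n (j + 1)) ≤ T / 2 ^ n := by
  have hstep : T * (j / 2 ^ n) - T * ((j + 1 : ℕ) / 2 ^ n) = -(T / 2 ^ n) := by
    push_cast
    ring
  refine ((LipschitzWith.projIcc hT.out).dist_le_mul _ _).trans (le_of_eq ?_)
  rw [NNReal.coe_one, one_mul, Real.dist_eq, hstep, abs_neg,
    abs_of_nonneg (div_nonneg hT.out (by positivity))]

theorem le_dyadic_succ_of_dist_lt {n i : ℕ} {s t : Set.Icc (0 : ℝ) T}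
    (hs : s ≤ dyadic T n i) (hst : dist s t < T / 2 ^ n) : t ≤ dyadic T n (i + 1) := by
  have hi : 0 ≤ T * (i / 2 ^ n : ℝ) := mul_nonneg hT.out (by positivity)
  have hs' : (s : ℝ) ≤ T * (i / 2 ^ n) :=
    (show (s : ℝ) ≤ dyadic T n i from hs).trans (max_le hi (min_le_right _ _))
  have ht : (t : ℝ) - s < T / 2 ^ n :=
    (le_abs_self _).trans_lt (by rwa [← Real.dist_eq, dist_comm])
  refine show (t : ℝ) ≤ max 0 (min T _) from le_max_of_le_right (le_min t.2.2 ?_)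
  push_cast
  rw [add_div, mul_add, mul_one_div]
  linarith

/-- The index of the first point of the `n`-th dyadic grid lying at or after `t`. -/
noncomputable def dyadicCeil (n : ℕ) (t : Set.Icc (0 : ℝ) T) : ℕ :=
  sInf {j | t ≤ dyadic T n j}

theorem le_dyadic_dyadicCeil (n : ℕ) (t : Set.Icc (0 : ℝ) T) : t ≤ dyadic T n (dyadicCeil n t) :=
  Nat.sInf_mem (s := {j | t ≤ dyadic T n j})
    ⟨2 ^ n, show t ≤ dyadic T n (2 ^ n) from dyadic_two_pow (T := T) n ▸ le_top⟩

theorem dyadicCeil_le {n j : ℕ} {t : Set.Icc (0 : ℝ) T} (h : t ≤ dyadic T n j) :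
    dyadicCeil n t ≤ j :=
  Nat.sInf_le h

theorem dyadic_lt_of_lt_dyadicCeil {n j : ℕ} {t : Set.Icc (0 : ℝ) T} (h : j < dyadicCeil n t) :
    dyadic T n j < t :=
  not_le.1 fun hle => h.not_ge (dyadicCeil_le hle)

theorem monotone_dyadicCeil (n : ℕ) : Monotone (dyadicCeil (T := T) n) := fun _ t h =>
  dyadicCeil_le (h.trans (le_dyadic_dyadicCeil n t))

theorem dyadicCeil_bot (n : ℕ) : dyadicCeil (T := T) n ⊥ = 0 :=
  Nat.le_zero.1 (dyadicCeil_le bot_le)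

theorem dyadic_dyadicCeil_dyadic {m n : ℕ} (h : m ≤ n) (i : ℕ) :
    dyadic T n (dyadicCeil n (dyadic T m i)) = dyadic T m i := by
  refine le_antisymm ?_ (le_dyadic_dyadicCeil n _)
  rw [← dyadic_mul_two_pow h i]
  exact monotone_dyadic n (dyadicCeil_le le_rfl)

theorem dist_dyadic_dyadicCeil_le (n : ℕ) (t : Set.Icc (0 : ℝ) T) :
    dist (dyadic T n (dyadicCeil n t)) t ≤ T / 2 ^ n := by
  have ht := le_dyadic_dyadicCeil n t
  rcases h : dyadicCeil n t with _ | j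
  · rw [h, dyadic_zero, le_bot_iff] at ht
    rw [ht, dyadic_zero, dist_self]
    exact div_nonneg hT.out (by positivity)
  · have hj : dyadic T n j < t := dyadic_lt_of_lt_dyadicCeil (h ▸ j.lt_succ_self)
    rw [h] at ht
    refine le_trans ?_ (dist_dyadic_succ_le n j)
    rw [dist_comm]
    exact Real.dist_right_le_of_mem_uIcc (Set.mem_uIcc_of_le hj.le ht)

theorem tendsto_div_two_pow (a : ℝ) :
    Filter.Tendsto (fun n : ℕ => a / 2 ^ n) Filter.atTop (nhds 0) :=
  tendsto_const_nhds.div_atTop (tendsto_pow_atTop_atTop_of_one_lt one_lt_two)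

theorem tendsto_dyadic_dyadicCeil (t : Set.Icc (0 : ℝ) T) :
    Filter.Tendsto (fun n => dyadic T n (dyadicCeil n t)) Filter.atTop (nhds t) :=
  tendsto_iff_dist_tendsto_zero.2 (squeeze_zero (fun _ => dist_nonneg)
    (fun n => dist_dyadic_dyadicCeil_le n t) (tendsto_div_two_pow T))

/-- The largest oscillation of the path `x` between two points of the dyadic grids, of any meshes,
at distance at most `T / 2 ^ m`. Only countably many differences are compared, so that the
oscillation of a process is measurable. -/
noncomputable def dyadicOsc (x : Set.Icc (0 : ℝ) T → ℝ) (m : ℕ) : ℝ :=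
  ⨆ p : {p : ℕ × ℕ × ℕ // dist (dyadic T p.1 p.2.1) (dyadic T p.1 p.2.2) ≤ T / 2 ^ m},
    |x (dyadic T p.1.1 p.1.2.1) - x (dyadic T p.1.1 p.1.2.2)|

variable {x : Set.Icc (0 : ℝ) T → ℝ}

theorem abs_sub_le_dyadicOsc (hx : Continuous x) {m n i j : ℕ}
    (h : dist (dyadic T n i) (dyadic T n j) ≤ T / 2 ^ m) :
    |x (dyadic T n i) - x (dyadic T n j)| ≤ dyadicOsc x m := by
  obtain ⟨C, hC⟩ := (isCompact_range
    (f := fun p : Set.Icc (0 : ℝ) T × Set.Icc (0 : ℝ) T => |x p.1 - x p.2|)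
    (by fun_prop)).bddAbove
  exact le_ciSup (f := fun p : {p : ℕ × ℕ × ℕ //
      dist (dyadic T p.1 p.2.1) (dyadic T p.1 p.2.2) ≤ T / 2 ^ m} =>
    |x (dyadic T p.1.1 p.1.2.1) - x (dyadic T p.1.1 p.1.2.2)|)
    ⟨C, by rintro _ ⟨p, rfl⟩; exact hC ⟨(_, _), rfl⟩⟩ ⟨(n, i, j), h⟩

theorem dyadicOsc_nonneg (x : Set.Icc (0 : ℝ) T → ℝ) (m : ℕ) : 0 ≤ dyadicOsc x m :=
  Real.iSup_nonneg fun _ => abs_nonneg _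

theorem dyadicOsc_le_of_dist_le {m : ℕ} {a : ℝ} (ha : 0 ≤ a)
    (h : ∀ s t, dist s t ≤ T / 2 ^ m → |x s - x t| ≤ a) : dyadicOsc x m ≤ a :=
  Real.iSup_le (fun p => h _ _ p.2) ha

theorem dyadicOsc_le_of_mem_Icc {y : ℝ}
    (hx : ∀ t, x t ∈ Set.Icc 0 y) (m : ℕ) : dyadicOsc x m ≤ y :=
  dyadicOsc_le_of_dist_le ((hx ⊥).1.trans (hx ⊥).2) fun s t _ =>
    (abs_sub_le_of_nonneg_of_le (hx s).1 (hx s).2 (hx t).1 (hx t).2)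

theorem tendsto_dyadicOsc (hx : Continuous x) :
    Filter.Tendsto (dyadicOsc x) Filter.atTop (nhds 0) := by
  refine Metric.nhds_basis_closedBall.tendsto_right_iff.2 fun ε hε => ?_
  obtain ⟨δ, hδ, hxδ⟩ := Metric.uniformContinuous_iff.1
    (CompactSpace.uniformContinuous_of_continuous hx) ε hε
  filter_upwards [(tendsto_div_two_pow T).eventually_lt_const hδ] with m hm
  rw [mem_closedBall_zero_iff, Real.norm_of_nonneg (dyadicOsc_nonneg x m)]
  exact dyadicOsc_le_of_dist_le hε.le fun s t hst => (hxδ (hst.trans_lt hm)).le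

theorem measurable_dyadicOsc {Ω : Type*} [MeasurableSpace Ω] {X : Set.Icc (0 : ℝ) T → Ω → ℝ}
    (hX : ∀ t, Measurable (X t)) (m : ℕ) : Measurable fun ω => dyadicOsc (X · ω) m :=
  Measurable.iSup fun _ => ((hX _).sub (hX _)).abs

theorem continuous_of_antitone_of_dyadic {g : Set.Icc (0 : ℝ) T → ℝ} (hg : Antitone g)
    (h : ∀ ε > 0, ∃ m, ∀ i < 2 ^ m, g (dyadic T m i) - g (dyadic T m (i + 1)) < ε) :
    Continuous g := by
  rcases hT.out.eq_or_lt with rfl | hT0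
  · have : Subsingleton (Set.Icc (0 : ℝ) 0) := Set.subsingleton_Icc_of_ge le_rfl |>.coe_sort
    exact continuous_of_const fun s t => congrArg g (Subsingleton.elim s t)
  refine (Metric.uniformContinuous_iff.2 fun ε hε => ?_).continuous
  obtain ⟨m, hm⟩ := h (ε / 2) (half_pos hε)
  have hstep (i : ℕ) : g (dyadic T m i) - g (dyadic T m (i + 1)) < ε / 2 := by
    rcases lt_or_ge i (2 ^ m) with hi | hi
    · exact hm i hi
    · rw [dyadic_of_two_pow_le hi, dyadic_of_two_pow_le (hi.trans i.le_succ), sub_self]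
      exact half_pos hε
  have hclose {s t : Set.Icc (0 : ℝ) T} (hd : dist s t < T / 2 ^ m) :
      g s - g t < ε := by
    have ht := hg (le_dyadic_succ_of_dist_lt (le_dyadic_dyadicCeil m s) hd)
    have hi := hstep (dyadicCeil m s)
    rcases h : dyadicCeil m s with _ | j
    · have hs := le_dyadic_dyadicCeil m s
      rw [h, dyadic_zero, le_bot_iff] at hs
      rw [h, dyadic_zero, ← hs] at hi
      rw [h] at ht
      linarith
    · have hj := hstep j
      rw [h] at ht hi
      have hjs : dyadic T m j < s := dyadic_lt_of_lt_dyadicCeil (h ▸ j.lt_succ_self)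
      linarith [hg hjs.le]
  refine ⟨T / 2 ^ m, div_pos hT0 (by positivity), fun {s t} hd => ?_⟩
  wlog hst : s ≤ t generalizing s t
  · rw [dist_comm] at hd ⊢
    exact this hd (le_of_not_ge hst)
  rw [Real.dist_eq, abs_of_nonneg (sub_nonneg.2 (hg hst))]
  exact hclose hd

theorem eq_of_eq_dyadic {g h : Set.Icc (0 : ℝ) T → ℝ} (hg : Continuous g) (hh : Continuous h)
    (hgh : ∀ n i, g (dyadic T n i) = h (dyadic T n i)) : g = h :=
  funext fun t => tendsto_nhds_unique
    ((hg.tendsto t).comp (tendsto_dyadic_dyadicCeil t))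
    (((hh.tendsto t).comp (tendsto_dyadic_dyadicCeil t)).congr fun n => (hgh n _).symm)

end Dyadic

section Uniqueness

theorem sqVar_le_of_step_le {Ω : Type*} {X K : ℕ → Ω → ℝ} {ω : Ω} {y ε δ : ℝ}
    (hX : ∀ i, X i ω ≤ y) (hX0 : ∀ i, 0 ≤ X i ω) (hδ : 0 < δ) (hKδ : ∀ i, δ ≤ K i ω)
    (hK : Antitone fun i => K i ω) (hε : ∀ i, K i ω - K (i + 1) ω ≤ ε) (k : ℕ) :
    sqVar X K k ω ≤ y * (ε / δ) * (K 0 ω - K k ω) := by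
  rw [← Finset.sum_range_sub' (fun i => K i ω), Finset.mul_sum]
  refine Finset.sum_le_sum fun i _ => ?_
  have hd : 0 ≤ K i ω - K (i + 1) ω := sub_nonneg.2 (hK i.le_succ)
  rw [mul_assoc]
  refine mul_le_mul (hX _) ?_ (div_nonneg (sq_nonneg _) (hδ.le.trans (hKδ i)))
    ((hX0 i).trans (hX i))
  rw [sq, ← div_mul_eq_mul_div]
  exact mul_le_mul_of_nonneg_right (div_le_div₀ (hd.trans (hε i)) (hε i) hδ (hKδ i)) hd

variable {T : ℝ} [Fact (0 ≤ T)] {Ω : Type*} {mΩ : MeasurableSpace Ω} {μ : Measure Ω}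
  {ℱ : Filtration (Set.Icc (0 : ℝ) T) mΩ} {X G H : Set.Icc (0 : ℝ) T → Ω → ℝ} {Y : Ω → ℝ}

namespace IsMulCompensator

theorem comp_dyadic (hG : IsMulCompensator X G ℱ μ) (n : ℕ) :
    IsMulCompensator (fun i => X (dyadic T n i)) (fun i => G (dyadic T n i))
      (reindexFiltration ℱ (monotone_dyadic n)) μ :=
  hG.reindex (monotone_dyadic n) (dyadic_zero n)

theorem tendsto_integral_sqVar_dyadic (hG : IsMulCompensator X G ℱ μ)
    (hGc : ∀ ω, Continuous (G · ω)) (hX : ∀ t, Integrable (X t) μ) (hX0 : ∀ t ω, 0 ≤ X t ω)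
    (hXY : ∀ t ω, X t ω ≤ Y ω) (hY : Integrable Y μ) (k : ℕ → ℕ) :
    Filter.Tendsto (fun n => ∫ ω, sqVar (fun i => X (dyadic T n i))
      (fun i => G (dyadic T n i)) (k n) ω ∂μ) Filter.atTop (nhds 0) := by
  have hY0 (ω : Ω) : 0 ≤ Y ω := (hX0 ⊥ ω).trans (hXY ⊥ ω)
  have hmem (n : ℕ) (ω : Ω) : sqVar (fun i => X (dyadic T n i))
      (fun i => G (dyadic T n i)) (k n) ω ∈ Set.Icc 0 (Y ω) :=
    sqVar_mem_Icc (fun i => ⟨hX0 _ ω, hXY _ ω⟩) (fun i => ⟨hG.pos _ ω, hG.le_one _ ω⟩)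
      ((hG.comp_dyadic n).antitone ω) (k n)
  rw [← integral_zero Ω ℝ (μ := μ)]
  refine tendsto_integral_of_dominated_convergence Y (fun n =>
    ((hG.comp_dyadic n).integrable_sqVar (fun i => hX _) (k n)).aestronglyMeasurable) hY
    (fun n => ae_of_all _ fun ω => ?_) (ae_of_all _ fun ω => ?_)
  · exact (Real.norm_of_nonneg (hmem n ω).1).trans_le (hmem n ω).2
  · have hbound (n : ℕ) : sqVar (fun i => X (dyadic T n i))
        (fun i => G (dyadic T n i)) (k n) ω ≤ Y ω * (dyadicOsc (G · ω) n / G ⊤ ω) := by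
      refine (sqVar_le_of_step_le (fun i => hXY _ ω) (fun i => hX0 _ ω) (hG.pos ⊤ ω)
        (fun i => hG.antitone ω le_top) ((hG.comp_dyadic n).antitone ω)
        (fun i => (le_abs_self _).trans (abs_sub_le_dyadicOsc (hGc ω) (dist_dyadic_succ_le n i)))
        (k n)).trans (mul_le_of_le_one_right (mul_nonneg (hY0 ω) (div_nonneg
          (dyadicOsc_nonneg _ n) (hG.pos ⊤ ω).le)) ?_)
      linarith [hG.le_one (dyadic T n 0) ω, hG.pos (dyadic T n (k n)) ω]
    refine squeeze_zero (fun n => (hmem n ω).1) hbound ?_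
    simpa only [zero_div, mul_zero] using
      ((tendsto_dyadicOsc (hGc ω)).div_const (G ⊤ ω)).const_mul (Y ω)

variable [IsFiniteMeasure μ]

theorem ae_eq_dyadic (hG : IsMulCompensator X G ℱ μ) (hH : IsMulCompensator X H ℱ μ)
    (hGc : ∀ ω, Continuous (G · ω)) (hHc : ∀ ω, Continuous (H · ω))
    (hX : ∀ t, Integrable (X t) μ) (hX0 : ∀ t ω, 0 < X t ω) (hXY : ∀ t ω, X t ω ≤ Y ω)
    (hY : Integrable Y μ) (m i : ℕ) :
    G (dyadic T m i) =ᵐ[μ] H (dyadic T m i) := by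
  set t := dyadic T m i
  have hle : ∀ᶠ n in Filter.atTop, ∫ ω, X t ω * (G t ω - H t ω) ^ 2 ∂μ
      ≤ 8 * (∫ ω, sqVar (fun i => X (dyadic T n i)) (fun i => G (dyadic T n i))
          (i * 2 ^ (n - m)) ω ∂μ
        + ∫ ω, sqVar (fun i => X (dyadic T n i)) (fun i => H (dyadic T n i))
          (i * 2 ^ (n - m)) ω ∂μ) := by
    filter_upwards [Filter.eventually_ge_atTop m] with n hmn
    have h := (hG.comp_dyadic n).integral_mul_sq_sub_le (hH.comp_dyadic n) (fun i => hX _)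
      (fun i ω => (hX0 _ ω).le) (i * 2 ^ (n - m))
    rwa [dyadic_mul_two_pow hmn i] at h
  have htendsto := ((hG.tendsto_integral_sqVar_dyadic hGc hX (fun t ω => (hX0 t ω).le) hXY hY
    fun n => i * 2 ^ (n - m)).add (hH.tendsto_integral_sqVar_dyadic hHc hX
      (fun t ω => (hX0 t ω).le) hXY hY fun n => i * 2 ^ (n - m))).const_mul 8
  rw [add_zero, mul_zero] at htendsto
  have hnonneg (ω : Ω) : 0 ≤ X t ω * (G t ω - H t ω) ^ 2 := mul_nonneg (hX0 t ω).le (sq_nonneg _)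
  have hzero := (integral_eq_zero_iff_of_nonneg hnonneg (hG.integrable_mul_sq_sub hH (hX t) t)).1
    ((ge_of_tendsto htendsto hle).antisymm (integral_nonneg hnonneg))
  filter_upwards [hzero] with ω hω
  exact sub_eq_zero.1 (pow_eq_zero_iff two_ne_zero |>.1
    ((mul_eq_zero.1 hω).resolve_left (hX0 t ω).ne'))

theorem ae_eq_of_continuous (hG : IsMulCompensator X G ℱ μ) (hH : IsMulCompensator X H ℱ μ)
    (hGc : ∀ ω, Continuous (G · ω)) (hHc : ∀ ω, Continuous (H · ω))
    (hX : ∀ t, Integrable (X t) μ) (hX0 : ∀ t ω, 0 < X t ω) (hXY : ∀ t ω, X t ω ≤ Y ω)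
    (hY : Integrable Y μ) : ∀ᵐ ω ∂μ, ∀ t, G t ω = H t ω := by
  filter_upwards [ae_all_iff.2 fun n => ae_all_iff.2 fun i =>
    hG.ae_eq_dyadic hH hGc hHc hX hX0 hXY hY n i] with ω hω
  exact congrFun (eq_of_eq_dyadic (hGc ω) (hHc ω) hω)

end IsMulCompensator

end Uniqueness

section DyadicDoob

variable {T : ℝ} [Fact (0 ≤ T)] {Ω : Type*} {mΩ : MeasurableSpace Ω} {μ : Measure Ω}
  {ℱ : Filtration (Set.Icc (0 : ℝ) T) mΩ} {X : Set.Icc (0 : ℝ) T → Ω → ℝ} {Y : Ω → ℝ}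

theorem integrable_dyadicOsc (hX : ∀ t, Measurable (X t)) (hXY : ∀ t ω, X t ω ∈ Set.Icc 0 (Y ω))
    (hY : Integrable Y μ) (m : ℕ) : Integrable (fun ω => dyadicOsc (X · ω) m) μ :=
  hY.mono' (measurable_dyadicOsc hX m).aestronglyMeasurable (ae_of_all _ fun ω => by
    rw [Real.norm_of_nonneg (dyadicOsc_nonneg _ m)]
    exact dyadicOsc_le_of_mem_Icc (fun t => hXY t ω) m)

theorem tendsto_integral_dyadicOsc (hX : ∀ t, Measurable (X t))
    (hXY : ∀ t ω, X t ω ∈ Set.Icc 0 (Y ω)) (hY : Integrable Y μ) (hXc : ∀ ω, Continuous (X · ω)) :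
    Filter.Tendsto (fun m => ∫ ω, dyadicOsc (X · ω) m ∂μ) Filter.atTop (nhds 0) := by
  suffices h : Filter.Tendsto (fun m => ∫ ω, dyadicOsc (X · ω) m ∂μ) Filter.atTop
      (nhds (∫ _, (0 : ℝ) ∂μ)) by simpa only [integral_zero] using h
  refine tendsto_integral_of_dominated_convergence Y
    (fun m => (measurable_dyadicOsc hX m).aestronglyMeasurable) hY
    (fun m => ae_of_all _ fun ω => ?_) (ae_of_all _ fun ω => tendsto_dyadicOsc (hXc ω))
  rw [Real.norm_of_nonneg (dyadicOsc_nonneg _ m)]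
  exact dyadicOsc_le_of_mem_Icc (fun t => hXY t ω) m

theorem submartingale_comp_dyadic (hX : Submartingale X ℱ μ) (n : ℕ) :
    Submartingale (fun i => X (dyadic T n i)) (reindexFiltration ℱ (monotone_dyadic n)) μ :=
  ⟨fun _ => hX.1 _, fun _ _ hij => hX.2.1 _ _ (monotone_dyadic n hij), fun _ => hX.2.2 _⟩

/-- The discrete compensator of `X` along the `n`-th dyadic grid, as a process on `[0, T]`. It is
read off at the first grid point after `t`, which keeps it adapted because the discrete compensator
is predictable. -/
noncomputable def dyadicDoob (X : Set.Icc (0 : ℝ) T → Ω → ℝ) (ℱ : Filtration (Set.Icc (0 : ℝ) T) mΩ)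
    (μ : Measure Ω) (n : ℕ) (t : Set.Icc (0 : ℝ) T) : Ω → ℝ :=
  mulDoob (fun i => X (dyadic T n i)) (reindexFiltration ℱ (monotone_dyadic n)) μ (dyadicCeil n t)

theorem dyadicDoob_pos (hX0 : ∀ t ω, 0 < X t ω) (n : ℕ) (t : Set.Icc (0 : ℝ) T) (ω : Ω) :
    0 < dyadicDoob X ℱ μ n t ω :=
  mulDoob_pos (fun _ => hX0 _) _ ω

theorem dyadicDoob_bot (n : ℕ) (ω : Ω) : dyadicDoob X ℱ μ n ⊥ ω = 1 := by
  rw [dyadicDoob, dyadicCeil_bot]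
  exact Finset.prod_range_zero _

theorem antitone_dyadicDoob (hX0 : ∀ t ω, 0 < X t ω) (n : ℕ) (ω : Ω) :
    Antitone fun t => dyadicDoob X ℱ μ n t ω :=
  (antitone_mulDoob (fun _ => hX0 _) ω).comp_monotone (monotone_dyadicCeil n)

theorem dyadicDoob_mem_Icc (hX0 : ∀ t ω, 0 < X t ω) (n : ℕ) (t : Set.Icc (0 : ℝ) T) (ω : Ω) :
    dyadicDoob X ℱ μ n t ω ∈ Set.Icc 0 1 :=
  ⟨(dyadicDoob_pos hX0 n t ω).le, dyadicDoob_bot (ℱ := ℱ) (μ := μ) n ω ▸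
    antitone_dyadicDoob hX0 n ω bot_le⟩

theorem stronglyAdapted_dyadicDoob (hX : StronglyAdapted ℱ X) (hX0 : ∀ t ω, 0 < X t ω) (n : ℕ) :
    StronglyAdapted ℱ (dyadicDoob X ℱ μ n) := fun t => by
  rw [dyadicDoob]
  rcases h : dyadicCeil n t with _ | j
  · exact stronglyMeasurable_const
  · have hj : dyadic T n j < t := dyadic_lt_of_lt_dyadicCeil (h ▸ j.lt_succ_self)
    exact (stronglyMeasurable_mulDoob_succ (ℱ := reindexFiltration ℱ (monotone_dyadic n))
      (fun i => hX _) (fun i => hX0 _) j).mono (ℱ.mono hj.le)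

variable [IsFiniteMeasure μ]

theorem isMulCompensator_dyadicDoob_dyadic (hX : Submartingale X ℱ μ) (hX0 : ∀ t ω, 0 < X t ω)
    {m n : ℕ} (h : m ≤ n) :
    IsMulCompensator (fun i => X (dyadic T m i)) (fun i => dyadicDoob X ℱ μ n (dyadic T m i))
      (reindexFiltration ℱ (monotone_dyadic m)) μ := by
  have hφ : Monotone fun i => dyadicCeil n (dyadic T m i) :=
    (monotone_dyadicCeil n).comp (monotone_dyadic m)
  have hcomp := (isMulCompensator_mulDoob (submartingale_comp_dyadic hX n) fun i => hX0 _).reindex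
    hφ (by rw [show (⊥ : ℕ) = 0 from rfl, dyadic_zero, dyadicCeil_bot])
  have hℱ : reindexFiltration (reindexFiltration ℱ (monotone_dyadic n)) hφ
      = reindexFiltration ℱ (monotone_dyadic m) :=
    Filtration.ext (funext fun i => congrArg ℱ (dyadic_dyadicCeil_dyadic h i))
  simp only [hℱ, dyadic_dyadicCeil_dyadic h] at hcomp
  exact hcomp

theorem integral_sqVar_dyadicDoob_le (hX : Submartingale X ℱ μ) (hX0 : ∀ t ω, 0 < X t ω)
    (hXc : ∀ ω, Continuous (X · ω)) {m n : ℕ} (h : m ≤ n)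
    (hosc : Integrable (fun ω => dyadicOsc (X · ω) m) μ) (k : ℕ) :
    ∫ ω, sqVar (fun i => X (dyadic T m i)) (fun i => dyadicDoob X ℱ μ n (dyadic T m i)) k ω ∂μ
      ≤ 2 * ∫ ω, dyadicOsc (X · ω) m ∂μ := by
  have hXn := submartingale_comp_dyadic hX n
  have hφ : Monotone fun i => dyadicCeil n (dyadic T m i) :=
    (monotone_dyadicCeil n).comp (monotone_dyadic m)
  have hclose (i j : ℕ)
      (hj : j ∈ Finset.Ico (dyadicCeil n (dyadic T m i)) (dyadicCeil n (dyadic T m (i + 1)))) :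
      dist (dyadic T n (dyadicCeil n (dyadic T m (i + 1)))) (dyadic T n j) ≤ T / 2 ^ m := by
    obtain ⟨hij, hji⟩ := Finset.mem_Ico.1 hj
    have hlo := monotone_dyadic (T := T) n hij
    have hhi := monotone_dyadic (T := T) n hji.le
    rw [dyadic_dyadicCeil_dyadic h] at hlo hhi ⊢
    rw [dist_comm]
    exact (Real.dist_right_le_of_mem_uIcc (Set.mem_uIcc_of_le hlo hhi)).trans
      (dist_dyadic_succ_le m i)
  have hle := (isMulCompensator_mulDoob hXn fun i => hX0 _).integral_sqVar_comp_le
    (stronglyMeasurable_mulDoob_succ hXn.stronglyAdapted fun i => hX0 _) hXn.integrable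
    (fun i ω => (hX0 _ ω).le) hφ hosc (fun ω => dyadicOsc_nonneg _ m)
    (fun i j hj ω => abs_sub_le_dyadicOsc (hXc ω) (hclose i j hj)) k
  simp only [dyadic_dyadicCeil_dyadic h] at hle
  exact hle

theorem integral_mul_sq_dyadicDoob_sub_le (hX : Submartingale X ℱ μ) (hX0 : ∀ t ω, 0 < X t ω)
    (hXc : ∀ ω, Continuous (X · ω)) {m n : ℕ} (h : m ≤ n)
    (hosc : Integrable (fun ω => dyadicOsc (X · ω) m) μ) (i : ℕ) :
    ∫ ω, X (dyadic T m i) ω * (dyadicDoob X ℱ μ m (dyadic T m i) ω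
        - dyadicDoob X ℱ μ n (dyadic T m i) ω) ^ 2 ∂μ ≤ 32 * ∫ ω, dyadicOsc (X · ω) m ∂μ := by
  have hm := integral_sqVar_dyadicDoob_le hX hX0 hXc le_rfl hosc i
  have hn := integral_sqVar_dyadicDoob_le hX hX0 hXc h hosc i
  have hle := (isMulCompensator_dyadicDoob_dyadic hX hX0 le_rfl).integral_mul_sq_sub_le
    (isMulCompensator_dyadicDoob_dyadic hX hX0 h) (fun i => hX.integrable _)
    (fun i ω => (hX0 _ ω).le) i
  linarith

end DyadicDoob

section Limit

open Filter

theorem abs_le_inv_add_mul_sq {a : ℝ} (ha : 0 < a) (d : ℝ) : |d| ≤ a⁻¹ + a * d ^ 2 := by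
  have hsq : a⁻¹ + a * d ^ 2 - |d| = a⁻¹ * ((a * |d| - 1 / 2) ^ 2 + 3 / 4) := by
    rw [← sq_abs d]
    field_simp
    ring
  exact sub_nonneg.1 (hsq ▸ by positivity)

theorem ae_exists_tendsto_of_integral_mul_sq_le {Ω : Type*} {mΩ : MeasurableSpace Ω}
    {μ : Measure Ω} {X : Ω → ℝ} {g : ℕ → Ω → ℝ} {C : ℝ} (hX0 : ∀ ω, 0 < X ω)
    (hint : ∀ k, Integrable (fun ω => X ω * (g k ω - g (k + 1) ω) ^ 2) μ)
    (hle : ∀ k, ∫ ω, X ω * (g k ω - g (k + 1) ω) ^ 2 ∂μ ≤ C * (1 / 4) ^ k) :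
    ∀ᵐ ω ∂μ, ∃ l, Tendsto (fun k => g k ω) atTop (nhds l) := by
  have hnonneg (k : ℕ) (ω : Ω) : 0 ≤ 2 ^ k * (X ω * (g k ω - g (k + 1) ω) ^ 2) :=
    mul_nonneg (by positivity) (mul_nonneg (hX0 ω).le (sq_nonneg _))
  have hgeom : Summable fun k : ℕ => ((1 : ℝ) / 2) ^ k := summable_geometric_two
  have hsum : Summable fun k => ∫ ω, 2 ^ k * (X ω * (g k ω - g (k + 1) ω) ^ 2) ∂μ := by
    refine (hgeom.mul_left C).of_nonneg_of_le (fun k => integral_nonneg (hnonneg k)) fun k => ?_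
    rw [integral_const_mul]
    calc (2 : ℝ) ^ k * ∫ ω, X ω * (g k ω - g (k + 1) ω) ^ 2 ∂μ
        ≤ 2 ^ k * (C * (1 / 4) ^ k) := mul_le_mul_of_nonneg_left (hle k) (by positivity)
      _ = C * (1 / 2) ^ k := by
        rw [mul_left_comm, ← mul_pow]
        norm_num
  filter_upwards [ae_summable_of_summable_integral (fun k => (hint k).const_mul _)
    (fun k => ae_of_all _ (hnonneg k)) hsum] with ω hω
  refine cauchySeq_tendsto_of_complete (cauchySeq_of_summable_dist ?_)
  refine (hgeom.add (hω.div_const (X ω))).of_nonneg_of_le (fun _ => dist_nonneg) fun k => ?_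
  rw [mul_left_comm, mul_div_cancel_left₀ _ (hX0 ω).ne', Real.dist_eq, one_div, inv_pow]
  exact abs_le_inv_add_mul_sq (by positivity) _

theorem measurable_sqVar {Ω : Type*} [MeasurableSpace Ω] {X K : ℕ → Ω → ℝ}
    (hX : ∀ i, Measurable (X i)) (hK : ∀ i, Measurable (K i)) (k : ℕ) :
    Measurable (sqVar X K k) :=
  Finset.measurable_sum _ fun i _ =>
    (hX (i + 1)).mul ((((hK i).sub (hK (i + 1))).pow_const 2).div (hK i))

variable {T : ℝ} [Fact (0 ≤ T)] {Ω : Type*} {mΩ : MeasurableSpace Ω} {μ : Measure Ω}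
  {ℱ : Filtration (Set.Icc (0 : ℝ) T) mΩ} {X : Set.Icc (0 : ℝ) T → Ω → ℝ} {Y : Ω → ℝ} {ν : ℕ → ℕ}

/-- The candidate for the continuous-time compensator of `X`: the upper limit of the dyadic
compensators along the subsequence `ν`. An upper limit is used so that the process is adapted and
monotone everywhere, not only where the sequence converges. -/
noncomputable def doobLimsup (X : Set.Icc (0 : ℝ) T → Ω → ℝ) (ℱ : Filtration (Set.Icc (0 : ℝ) T) mΩ)
    (μ : Measure Ω) (ν : ℕ → ℕ) (t : Set.Icc (0 : ℝ) T) (ω : Ω) : ℝ :=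
  limsup (fun k => dyadicDoob X ℱ μ (ν k) t ω) atTop

theorem isBoundedUnder_le_dyadicDoob (hX0 : ∀ t ω, 0 < X t ω) (t : Set.Icc (0 : ℝ) T) (ω : Ω) :
    IsBoundedUnder (· ≤ ·) atTop fun k => dyadicDoob X ℱ μ (ν k) t ω :=
  isBoundedUnder_of ⟨1, fun k => (dyadicDoob_mem_Icc hX0 (ν k) t ω).2⟩

theorem isCoboundedUnder_le_dyadicDoob (hX0 : ∀ t ω, 0 < X t ω) (t : Set.Icc (0 : ℝ) T) (ω : Ω) :
    IsCoboundedUnder (· ≤ ·) atTop fun k => dyadicDoob X ℱ μ (ν k) t ω :=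
  (isBoundedUnder_of ⟨0, fun k => (dyadicDoob_mem_Icc hX0 (ν k) t ω).1⟩ :
    IsBoundedUnder (· ≥ ·) atTop _).isCoboundedUnder_le

theorem antitone_doobLimsup (hX0 : ∀ t ω, 0 < X t ω) (ω : Ω) :
    Antitone fun t => doobLimsup X ℱ μ ν t ω := fun s t hst =>
  limsup_le_limsup (Eventually.of_forall fun k => antitone_dyadicDoob hX0 (ν k) ω hst)
    (isCoboundedUnder_le_dyadicDoob hX0 t ω) (isBoundedUnder_le_dyadicDoob hX0 s ω)

theorem doobLimsup_bot (ω : Ω) : doobLimsup X ℱ μ ν ⊥ ω = 1 := by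
  simp only [doobLimsup, dyadicDoob_bot, limsup_const]

theorem doobLimsup_mem_Icc (hX0 : ∀ t ω, 0 < X t ω) (t : Set.Icc (0 : ℝ) T) (ω : Ω) :
    doobLimsup X ℱ μ ν t ω ∈ Set.Icc 0 1 :=
  ⟨le_limsup_of_frequently_le (Frequently.of_forall fun _ => (dyadicDoob_mem_Icc hX0 _ t ω).1)
      (isBoundedUnder_le_dyadicDoob hX0 t ω),
    doobLimsup_bot (X := X) (ℱ := ℱ) (μ := μ) (ν := ν) ω ▸ antitone_doobLimsup hX0 ω bot_le⟩

theorem stronglyAdapted_doobLimsup (hX : StronglyAdapted ℱ X) (hX0 : ∀ t ω, 0 < X t ω) :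
    StronglyAdapted ℱ (doobLimsup X ℱ μ ν) := fun t =>
  Measurable.stronglyMeasurable <|
    Measurable.limsup fun k => (stronglyAdapted_dyadicDoob hX hX0 (ν k) t).measurable

variable [IsFiniteMeasure μ]

theorem ae_doobLimsup_top_pos (hX : Submartingale X ℱ μ) (hX0 : ∀ t ω, 0 < X t ω)
    (hXc : ∀ ω, Continuous (X · ω)) (ν : ℕ → ℕ) : ∀ᵐ ω ∂μ, 0 < doobLimsup X ℱ μ ν ⊤ ω := by
  have hXn (k : ℕ) := submartingale_comp_dyadic hX (ν k)
  have htop (n : ℕ) : dyadic T n (dyadicCeil n ⊤) = ⊤ := top_unique (le_dyadic_dyadicCeil n ⊤)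
  set D : ℕ → Ω → ℝ := fun k => predictablePart (fun i => X (dyadic T (ν k) i))
    (reindexFiltration ℱ (monotone_dyadic (ν k))) μ (dyadicCeil (T := T) (ν k) ⊤)
  have hD (k : ℕ) : ∫ ω, D k ω ∂μ ≤ ∫ ω, X ⊤ ω ∂μ := by
    rw [integral_predictablePart (hXn k).integrable, htop]
    exact sub_le_self _ (integral_nonneg fun ω => (hX0 _ ω).le)
  filter_upwards [ae_frequently_le_of_integral_le (fun k => integrable_predictablePart _)
      (fun k => ((stronglyAdapted_predictablePart' _).mono (Filtration.le _ _)).measurable)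
      (fun k => (hXn k).predictablePart_nonneg.mono fun ω h => h _) hD,
    ae_all_iff.2 fun k => exp_neg_predictablePart_div_le_mulDoob (hXn k) fun i => hX0 _]
    with ω ⟨c, hc⟩ hexp
  obtain ⟨δ, hδ, hXδ⟩ := isCompact_univ.exists_forall_le' (hXc ω).continuousOn
    fun t _ => hX0 t ω
  refine (Real.exp_pos (-(c / δ))).trans_le (le_limsup_of_frequently_le (hc.mono fun k hk => ?_)
    (isBoundedUnder_le_dyadicDoob hX0 ⊤ ω))
  refine le_trans (Real.exp_le_exp.2 (neg_le_neg (div_le_div_of_nonneg_right hk hδ.le)))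
    (hexp k δ hδ (fun i => hXδ _ trivial) _)

theorem ae_tendsto_doobLimsup_dyadic (hX : Submartingale X ℱ μ) (hX0 : ∀ t ω, 0 < X t ω)
    (hXc : ∀ ω, Continuous (X · ω)) (hν : StrictMono ν)
    (hosc : ∀ m, Integrable (fun ω => dyadicOsc (X · ω) m) μ)
    (hν4 : ∀ k, ∫ ω, dyadicOsc (X · ω) (ν k) ∂μ ≤ (1 / 4) ^ k) (m i : ℕ) :
    ∀ᵐ ω ∂μ, Tendsto (fun k => dyadicDoob X ℱ μ (ν k) (dyadic T m i) ω) atTop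
      (nhds (doobLimsup X ℱ μ ν (dyadic T m i) ω)) := by
  have hm (k : ℕ) : m ≤ ν (k + m) := (Nat.le_add_left m k).trans hν.le_apply
  have hle (k : ℕ) : ∫ ω, X (dyadic T m i) ω * (dyadicDoob X ℱ μ (ν (k + m)) (dyadic T m i) ω
      - dyadicDoob X ℱ μ (ν (k + 1 + m)) (dyadic T m i) ω) ^ 2 ∂μ ≤ 32 * (1 / 4) ^ k := by
    have h := integral_mul_sq_dyadicDoob_sub_le hX hX0 hXc
      (hν.monotone (Nat.add_le_add_right k.le_succ m)) (hosc _) (i * 2 ^ (ν (k + m) - m))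
    rw [dyadic_mul_two_pow (hm k)] at h
    have hpow : (1 / 4 : ℝ) ^ (k + m) ≤ (1 / 4) ^ k :=
      pow_le_pow_of_le_one (by norm_num) (by norm_num) (Nat.le_add_right k m)
    linarith [hν4 (k + m)]
  filter_upwards [ae_exists_tendsto_of_integral_mul_sq_le (hX0 _)
    (fun k => (isMulCompensator_dyadicDoob_dyadic hX hX0 (hm k)).integrable_mul_sq_sub
      (isMulCompensator_dyadicDoob_dyadic hX hX0 (hm (k + 1))) (hX.integrable _) i) hle]
    with ω ⟨l, hl⟩
  have hlim := (tendsto_add_atTop_iff_nat (f := fun k =>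
    dyadicDoob X ℱ μ (ν k) (dyadic T m i) ω) m).1 hl
  rwa [doobLimsup, hlim.limsup_eq]

end Limit

section Existence

open Filter

open Classical in
theorem exists_modification_forall_of_ae {ι β Ω : Type*} [Preorder ι] [OrderBot ι]
    [TopologicalSpace β] {mΩ : MeasurableSpace Ω} {μ : Measure Ω} {ℱ : Filtration ι mΩ}
    {L : ι → Ω → β} (hL : StronglyAdapted ℱ L)
    (hnull : ∀ s, MeasurableSet s → μ s = 0 → MeasurableSet[ℱ ⊥] s) {p : (ι → β) → Prop}
    {x : ι → β} (hx : p x) (h : ∀ᵐ ω ∂μ, p (L · ω)) :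
    ∃ G, StronglyAdapted ℱ G ∧ (∀ ω, p (G · ω)) ∧ ∀ t, G t =ᵐ[μ] L t := by
  obtain ⟨N, hLN, hN, hN0⟩ := exists_measurable_superset_of_null h
  refine ⟨fun t => N.piecewise (fun _ => x t) (L t), fun t => ?_, fun ω => ?_, fun t => ?_⟩
  · exact StronglyMeasurable.piecewise (ℱ.mono bot_le _ (hnull N hN hN0))
      stronglyMeasurable_const (hL t)
  · by_cases hω : ω ∈ N
    · simpa only [Set.piecewise_eq_of_mem _ _ _ hω] using hx
    · have hp : p (L · ω) := not_not.1 fun h => hω (hLN h)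
      simpa only [Set.piecewise_eq_of_notMem _ _ _ hω] using hp
  · filter_upwards [measure_eq_zero_iff_ae_notMem.1 hN0] with ω hω
    exact Set.piecewise_eq_of_notMem _ _ _ hω

variable {T : ℝ} [Fact (0 ≤ T)] {Ω : Type*} {mΩ : MeasurableSpace Ω} {μ : Measure Ω}
  {ℱ : Filtration (Set.Icc (0 : ℝ) T) mΩ} {X G M : Set.Icc (0 : ℝ) T → Ω → ℝ} {Y : Ω → ℝ}
  {ν : ℕ → ℕ}

theorem continuous_of_tendsto_sqVar_dyadic {ω : Ω} (hX : Continuous (X · ω))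
    (hX0 : ∀ t, 0 < X t ω) (hG : Antitone (G · ω)) (hG01 : ∀ t, G t ω ∈ Set.Ioc 0 1)
    (h : Tendsto (fun k => sqVar (fun i => X (dyadic T (ν k) i))
      (fun i => G (dyadic T (ν k) i)) (2 ^ ν k) ω) atTop (nhds 0)) : Continuous (G · ω) := by
  obtain ⟨δ, hδ, hXδ⟩ := isCompact_univ.exists_forall_le' hX.continuousOn fun t _ => hX0 t
  refine continuous_of_antitone_of_dyadic hG fun ε hε => ?_
  obtain ⟨k, hk⟩ := (h.eventually_lt_const (show 0 < δ * ε ^ 2 by positivity)).exists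
  refine ⟨ν k, fun i hi => lt_of_pow_lt_pow_left₀ 2 hε.le (lt_of_mul_lt_mul_left ?_ hδ.le)⟩
  set g : ℕ → ℝ := fun j => G (dyadic T (ν k) j) ω
  calc δ * (g i - g (i + 1)) ^ 2
      ≤ X (dyadic T (ν k) (i + 1)) ω * ((g i - g (i + 1)) ^ 2 / g i) :=
        mul_le_mul (hXδ _ trivial) (le_div_self (sq_nonneg _) (hG01 _).1 (hG01 _).2)
          (sq_nonneg _) (hX0 _).le
    _ ≤ sqVar (fun i => X (dyadic T (ν k) i)) (fun i => G (dyadic T (ν k) i)) (2 ^ ν k) ω :=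
        Finset.single_le_sum
          (f := fun j => X (dyadic T (ν k) (j + 1)) ω * ((g j - g (j + 1)) ^ 2 / g j))
          (fun j _ => mul_nonneg (hX0 _).le (div_nonneg (sq_nonneg _) (hG01 _).1.le))
          (Finset.mem_range.2 hi)
    _ < δ * ε ^ 2 := hk

theorem martingale_of_condExp_dyadic [IsFiniteMeasure μ] (hM : StronglyAdapted ℱ M)
    (hMc : ∀ ω, Continuous (M · ω)) (hMY : ∀ t ω, ‖M t ω‖ ≤ Y ω) (hY : Integrable Y μ)
    (h : ∀ n i, μ[M ⊤ | ℱ (dyadic T n i)] =ᵐ[μ] M (dyadic T n i)) : Martingale M ℱ μ := by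
  have hint (t : Set.Icc (0 : ℝ) T) : Integrable (M t) μ :=
    hY.mono' ((hM t).mono (ℱ.le t)).aestronglyMeasurable (ae_of_all _ (hMY t))
  have hend (s : Set.Icc (0 : ℝ) T) : μ[M ⊤ | ℱ s] =ᵐ[μ] M s := by
    have happrox (n : ℕ) :
        μ[M (dyadic T n (dyadicCeil n s)) | ℱ s] =ᵐ[μ] μ[M ⊤ | ℱ s] :=
      (condExp_congr_ae (h n _).symm).trans
        (condExp_condExp_of_le (ℱ.mono (le_dyadic_dyadicCeil n s)) (ℱ.le _))
    refine ((tendsto_condExp_unique _ (fun _ => M ⊤) (M s) (M ⊤) (fun _ => hint _)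
      (fun _ => hint _) (ae_of_all _ fun ω => ((hMc ω).tendsto s).comp
        (tendsto_dyadic_dyadicCeil s)) (ae_of_all _ fun ω => tendsto_const_nhds) Y hY Y hY
      (fun _ => ae_of_all _ (hMY _)) (fun _ => ae_of_all _ (hMY ⊤)) happrox).symm).trans ?_
    rw [condExp_of_stronglyMeasurable (ℱ.le s) (hM s) (hint s)]
  exact ⟨hM, fun s t hst => (condExp_congr_ae (hend t).symm).trans
    ((condExp_condExp_of_le (ℱ.mono hst) (ℱ.le t)).trans (hend s))⟩

variable [IsFiniteMeasure μ]

theorem ae_doobLimsup_mem_Ioc (hX : Submartingale X ℱ μ) (hX0 : ∀ t ω, 0 < X t ω)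
    (hXc : ∀ ω, Continuous (X · ω)) (ν : ℕ → ℕ) :
    ∀ᵐ ω ∂μ, ∀ t, doobLimsup X ℱ μ ν t ω ∈ Set.Ioc 0 1 := by
  filter_upwards [ae_doobLimsup_top_pos hX hX0 hXc ν] with ω hω t
  exact ⟨hω.trans_le (antitone_doobLimsup hX0 ω le_top),
    (doobLimsup_mem_Icc hX0 t ω).2⟩

theorem ae_sqVar_doobLimsup_mem_Icc (hX : Submartingale X ℱ μ) (hX0 : ∀ t ω, 0 < X t ω)
    (hXc : ∀ ω, Continuous (X · ω)) (hXY : ∀ t ω, X t ω ≤ Y ω) (ν : ℕ → ℕ) (m k : ℕ) :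
    ∀ᵐ ω ∂μ, sqVar (fun i => X (dyadic T m i)) (fun i => doobLimsup X ℱ μ ν (dyadic T m i)) k ω
      ∈ Set.Icc 0 (Y ω) := by
  filter_upwards [ae_doobLimsup_mem_Ioc hX hX0 hXc ν] with ω hω
  exact sqVar_mem_Icc (fun i => ⟨(hX0 _ ω).le, hXY _ ω⟩) (fun i => hω _)
    ((antitone_doobLimsup hX0 ω).comp_monotone (monotone_dyadic m)) k

theorem integrable_sqVar_doobLimsup (hX : Submartingale X ℱ μ) (hX0 : ∀ t ω, 0 < X t ω)
    (hXc : ∀ ω, Continuous (X · ω)) (hXY : ∀ t ω, X t ω ≤ Y ω) (hY : Integrable Y μ)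
    (ν : ℕ → ℕ) (m k : ℕ) :
    Integrable (sqVar (fun i => X (dyadic T m i))
      (fun i => doobLimsup X ℱ μ ν (dyadic T m i)) k) μ := by
  have hL := stronglyAdapted_doobLimsup (μ := μ) (ν := ν) hX.stronglyAdapted hX0
  refine hY.mono' (measurable_sqVar (fun i => ((hX.stronglyAdapted _).mono (ℱ.le _)).measurable)
    (fun i => ((hL _).mono (ℱ.le _)).measurable) k).aestronglyMeasurable ?_
  filter_upwards [ae_sqVar_doobLimsup_mem_Icc hX hX0 hXc hXY ν m k] with ω hω
  exact (Real.norm_of_nonneg hω.1).trans_le hω.2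

theorem integral_sqVar_doobLimsup_le (hX : Submartingale X ℱ μ) (hX0 : ∀ t ω, 0 < X t ω)
    (hXc : ∀ ω, Continuous (X · ω)) (hXY : ∀ t ω, X t ω ≤ Y ω) (hY : Integrable Y μ)
    (hν : StrictMono ν) (hosc : ∀ m, Integrable (fun ω => dyadicOsc (X · ω) m) μ)
    (hν4 : ∀ k, ∫ ω, dyadicOsc (X · ω) (ν k) ∂μ ≤ (1 / 4) ^ k) (m k : ℕ) :
    ∫ ω, sqVar (fun i => X (dyadic T m i)) (fun i => doobLimsup X ℱ μ ν (dyadic T m i)) k ω ∂μ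
      ≤ 2 * ∫ ω, dyadicOsc (X · ω) m ∂μ := by
  have hm (j : ℕ) : m ≤ ν (j + m) := (Nat.le_add_left m j).trans hν.le_apply
  have hcomp (j : ℕ) := isMulCompensator_dyadicDoob_dyadic hX hX0 (hm j)
  refine le_of_tendsto' (tendsto_integral_of_dominated_convergence Y
    (fun j => ((hcomp j).integrable_sqVar (fun i => hX.integrable _) k).aestronglyMeasurable) hY
    (fun j => ae_of_all _ fun ω => ?_) ?_) fun j =>
      integral_sqVar_dyadicDoob_le hX hX0 hXc (hm j) (hosc m) k
  · have hmem := sqVar_mem_Icc (X := fun i => X (dyadic T m i))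
      (fun i => ⟨(hX0 _ ω).le, hXY _ ω⟩) (fun i => ⟨(hcomp j).pos i ω, (hcomp j).le_one i ω⟩)
      ((hcomp j).antitone ω) k
    exact (Real.norm_of_nonneg hmem.1).trans_le hmem.2
  · filter_upwards [ae_doobLimsup_mem_Ioc hX hX0 hXc ν, ae_all_iff.2 fun i =>
      ae_tendsto_doobLimsup_dyadic hX hX0 hXc hν hosc hν4 m i] with ω hL hlim
    have hlim' (i : ℕ) := (tendsto_add_atTop_iff_nat m).2 (hlim i)
    exact tendsto_finsetSum _ fun i _ => ((((hlim' i).sub (hlim' (i + 1))).pow 2).div (hlim' i)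
      (hL _).1.ne').const_mul _

theorem condExp_mul_doobLimsup_dyadic (hX : Submartingale X ℱ μ) (hX0 : ∀ t ω, 0 < X t ω)
    (hXc : ∀ ω, Continuous (X · ω)) (hν : StrictMono ν)
    (hosc : ∀ m, Integrable (fun ω => dyadicOsc (X · ω) m) μ)
    (hν4 : ∀ k, ∫ ω, dyadicOsc (X · ω) (ν k) ∂μ ≤ (1 / 4) ^ k) (m i : ℕ) :
    μ[X ⊤ * doobLimsup X ℱ μ ν ⊤ | ℱ (dyadic T m i)]
      =ᵐ[μ] X (dyadic T m i) * doobLimsup X ℱ μ ν (dyadic T m i) := by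
  have hm (k : ℕ) : m ≤ ν (k + m) := (Nat.le_add_left m k).trans hν.le_apply
  have htop : dyadic T m (max i (2 ^ m)) = ⊤ := dyadic_of_two_pow_le (le_max_right i _)
  have hlim (j : ℕ) : ∀ᵐ ω ∂μ, Tendsto (fun k => (X (dyadic T m j)
      * dyadicDoob X ℱ μ (ν (k + m)) (dyadic T m j)) ω) atTop
      (nhds ((X (dyadic T m j) * doobLimsup X ℱ μ ν (dyadic T m j)) ω)) := by
    filter_upwards [ae_tendsto_doobLimsup_dyadic hX hX0 hXc hν hosc hν4 m j] with ω hω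
    exact ((tendsto_add_atTop_iff_nat m).2 hω).const_mul _
  have hbound (t : Set.Icc (0 : ℝ) T) (k : ℕ) :
      ∀ᵐ ω ∂μ, ‖(X t * dyadicDoob X ℱ μ (ν (k + m)) t) ω‖ ≤ X t ω := ae_of_all _ fun ω => by
    obtain ⟨h0, h1⟩ := dyadicDoob_mem_Icc (ℱ := ℱ) (μ := μ) hX0 (ν (k + m)) t ω
    exact (Real.norm_of_nonneg (mul_nonneg (hX0 t ω).le h0)).trans_le
      (mul_le_of_le_one_right (hX0 t ω).le h1)
  have hmart (k : ℕ) := (isMulCompensator_dyadicDoob_dyadic hX hX0 (hm k)).martingale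
  have heq := tendsto_condExp_unique _ _ _ _ (fun k => (hmart k).integrable (max i (2 ^ m)))
    (fun k => (hmart k).integrable i) (hlim _) (hlim i) _ (hX.integrable _) _ (hX.integrable _)
    (hbound _) (hbound _) fun k => ((hmart k).2 i _ (le_max_left i _)).trans
      (condExp_of_stronglyMeasurable (ℱ.le _) ((hmart k).1 i)
        ((hmart k).integrable i)).symm.eventuallyEq
  rw [htop] at heq
  have hL := stronglyAdapted_doobLimsup (μ := μ) (ν := ν) hX.stronglyAdapted hX0 (dyadic T m i)
  refine heq.trans (condExp_of_stronglyMeasurable (ℱ.le _)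
    ((hX.stronglyAdapted _).mul hL) ?_).eventuallyEq
  exact integrable_mul_of_mem_Icc (hX.integrable _) (hL.mono (ℱ.le _)) (doobLimsup_mem_Icc hX0 _)

theorem ae_continuous_doobLimsup (hX : Submartingale X ℱ μ) (hX0 : ∀ t ω, 0 < X t ω)
    (hXc : ∀ ω, Continuous (X · ω)) (hXY : ∀ t ω, X t ω ≤ Y ω) (hY : Integrable Y μ)
    (hν : StrictMono ν) (hosc : ∀ m, Integrable (fun ω => dyadicOsc (X · ω) m) μ)
    (hν4 : ∀ k, ∫ ω, dyadicOsc (X · ω) (ν k) ∂μ ≤ (1 / 4) ^ k) :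
    ∀ᵐ ω ∂μ, Continuous (doobLimsup X ℱ μ ν · ω) := by
  have hnonneg (k : ℕ) : ∀ᵐ ω ∂μ, 0 ≤ sqVar (fun i => X (dyadic T (ν k) i))
      (fun i => doobLimsup X ℱ μ ν (dyadic T (ν k) i)) (2 ^ ν k) ω :=
    (ae_sqVar_doobLimsup_mem_Icc hX hX0 hXc hXY ν (ν k) _).mono fun ω h => h.1
  have hgeom : Summable fun k : ℕ => ((1 : ℝ) / 4) ^ k :=
    summable_geometric_of_lt_one (by norm_num) (by norm_num)
  have hsum : Summable fun k => ∫ ω, sqVar (fun i => X (dyadic T (ν k) i))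
      (fun i => doobLimsup X ℱ μ ν (dyadic T (ν k) i)) (2 ^ ν k) ω ∂μ :=
    (hgeom.mul_left 2).of_nonneg_of_le (fun k => integral_nonneg_of_ae (hnonneg k)) fun k =>
      (integral_sqVar_doobLimsup_le hX hX0 hXc hXY hY hν hosc hν4 _ _).trans
        (mul_le_mul_of_nonneg_left (hν4 k) zero_le_two)
  filter_upwards [ae_doobLimsup_mem_Ioc hX hX0 hXc ν, ae_summable_of_summable_integral
    (fun k => integrable_sqVar_doobLimsup hX hX0 hXc hXY hY ν _ _) hnonneg hsum] with ω hω hsumω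
  exact continuous_of_tendsto_sqVar_dyadic (hXc ω) (fun t => hX0 t ω) (antitone_doobLimsup hX0 ω)
    hω hsumω.tendsto_atTop_zero

theorem exists_continuous_isMulCompensator (hX : Submartingale X ℱ μ) (hX0 : ∀ t ω, 0 < X t ω)
    (hXc : ∀ ω, Continuous (X · ω)) (hXY : ∀ t ω, X t ω ≤ Y ω) (hY : Integrable Y μ)
    (hnull : ∀ s, MeasurableSet s → μ s = 0 → MeasurableSet[ℱ ⊥] s) :
    ∃ G, IsMulCompensator X G ℱ μ ∧ ∀ ω, Continuous (G · ω) := by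
  have hXm (t : Set.Icc (0 : ℝ) T) : Measurable (X t) :=
    ((hX.stronglyAdapted t).mono (ℱ.le t)).measurable
  have hXmem (t : Set.Icc (0 : ℝ) T) (ω : Ω) : X t ω ∈ Set.Icc 0 (Y ω) := ⟨(hX0 t ω).le, hXY t ω⟩
  have hosc := integrable_dyadicOsc hXm hXmem hY
  obtain ⟨ν, hν, hν4⟩ := extraction_forall_of_eventually fun k =>
    (tendsto_integral_dyadicOsc hXm hXmem hY hXc).eventually_le_const
      (show (0 : ℝ) < (1 / 4) ^ k by positivity)
  obtain ⟨G, hGad, hG, hGL⟩ := exists_modification_forall_of_ae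
    (stronglyAdapted_doobLimsup hX.stronglyAdapted hX0) hnull
    (p := fun g => (∀ t, 0 < g t) ∧ g ⊥ = 1 ∧ Antitone g ∧ Continuous g)
    (x := fun _ => 1) ⟨fun _ => one_pos, rfl, antitone_const, continuous_const⟩ <| by
      filter_upwards [ae_doobLimsup_mem_Ioc hX hX0 hXc ν,
        ae_continuous_doobLimsup hX hX0 hXc hXY hY hν hosc hν4] with ω hpos hcont
      exact ⟨fun t => (hpos t).1, doobLimsup_bot ω, antitone_doobLimsup hX0 ω, hcont⟩
  refine ⟨G, ⟨fun t ω => (hG ω).1 t, fun ω => (hG ω).2.1, fun ω => (hG ω).2.2.1, hGad, ?_⟩,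
    fun ω => (hG ω).2.2.2⟩
  refine martingale_of_condExp_dyadic (hX.stronglyAdapted.mul hGad)
    (fun ω => (hXc ω).mul (hG ω).2.2.2) (fun t ω => ?_) hY fun n i => ?_
  · exact (Real.norm_of_nonneg (mul_nonneg (hX0 t ω).le ((hG ω).1 t).le)).trans_le
      ((mul_le_of_le_one_right (hX0 t ω).le
        ((hG ω).2.1 ▸ (hG ω).2.2.1 bot_le)).trans (hXY t ω))
  · have hXG (t : Set.Icc (0 : ℝ) T) : (X * G) t =ᵐ[μ] X t * doobLimsup X ℱ μ ν t :=
      EventuallyEq.rfl.mul (hGL t)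
    exact (condExp_congr_ae (hXG ⊤)).trans
      ((condExp_mul_doobLimsup_dyadic hX hX0 hXc hν hosc hν4 n i).trans (hXG _).symm)

end Existence

section Strictness

variable {Ω : Type*} {m m0 : MeasurableSpace Ω} {μ : Measure Ω}

theorem ae_lt_condExp_iff_of_condExp_mul (hm : m ≤ m0) [SigmaFinite (μ.trim hm)]
    {x x' g g' : Ω → ℝ} (hx' : Integrable x' μ) (hg : Integrable g μ) (hg' : Integrable g' μ)
    (hxg : Integrable (x' * g) μ) (hxg' : Integrable (x' * g') μ) (hgm : StronglyMeasurable[m] g)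
    (hx0 : ∀ ω, 0 < x' ω) (hg0 : ∀ ω, 0 < g ω) (hgg : ∀ ω, g' ω ≤ g ω)
    (hmart : μ[x' * g' | m] =ᵐ[μ] x * g) :
    (∀ᵐ ω ∂μ, x ω < (μ[x' | m]) ω) ↔ ∀ᵐ ω ∂μ, (μ[g' | m]) ω < g ω := by
  have hdrop : μ[g - g' | m] =ᵐ[μ] g - μ[g' | m] := by
    have h := condExp_sub hg hg' m
    rwa [condExp_of_stronglyMeasurable hm hgm hg] at h
  have hgain : μ[x' * g - x' * g' | m] =ᵐ[μ] g * (μ[x' | m] - x) := by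
    filter_upwards [condExp_sub hxg hxg' m, hmart,
      condExp_mul_of_stronglyMeasurable_right hgm hxg hx'] with ω hsub hω hpull
    rw [hsub, Pi.sub_apply, hω, hpull]
    simp only [Pi.mul_apply, Pi.sub_apply]
    ring
  have hdrop0 (ω : Ω) : 0 ≤ (g - g') ω := sub_nonneg.2 (hgg ω)
  have hmul (ω : Ω) : (x' * g - x' * g') ω = x' ω * (g - g') ω := (mul_sub _ _ _).symm
  constructor <;> intro h
  · have hpos : ∀ᵐ ω ∂μ, 0 < (μ[x' * g - x' * g' | m]) ω := by
      filter_upwards [h, hgain] with ω hω hgω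
      rw [hgω]
      exact mul_pos (hg0 ω) (sub_pos.2 hω)
    filter_upwards [condExp_pos_of_condExp_pos hm (hxg.sub hxg') (hg.sub hg') (ae_of_all _ hdrop0)
      (ae_of_all _ fun ω h0 => by rw [hmul, h0, mul_zero]) hpos, hdrop] with ω hω hgω
    rw [hgω] at hω
    exact sub_pos.1 hω
  · have hpos : ∀ᵐ ω ∂μ, 0 < (μ[g - g' | m]) ω := by
      filter_upwards [h, hdrop] with ω hω hgω
      rw [hgω]
      exact sub_pos.2 hω
    filter_upwards [condExp_pos_of_condExp_pos hm (hg.sub hg') (hxg.sub hxg')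
      (ae_of_all _ fun ω => hmul ω ▸ mul_nonneg (hx0 ω).le (hdrop0 ω))
      (ae_of_all _ fun ω h0 => (mul_eq_zero.1 (hmul ω ▸ h0)).resolve_left (hx0 ω).ne') hpos,
      hgain] with ω hω hgω
    rw [hgω] at hω
    exact sub_pos.1 (pos_of_mul_pos_right hω (hg0 ω).le)

theorem IsMulCompensator.ae_lt_condExp_iff {ι : Type*} [Preorder ι] [OrderBot ι]
    {ℱ : Filtration ι m0} [IsFiniteMeasure μ] {X G : ι → Ω → ℝ} (hG : IsMulCompensator X G ℱ μ)
    (hX : ∀ i, Integrable (X i) μ) (hX0 : ∀ i ω, 0 < X i ω) {i j : ι} (hij : i ≤ j) :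
    (∀ᵐ ω ∂μ, X i ω < (μ[X j | ℱ i]) ω) ↔ ∀ᵐ ω ∂μ, (μ[G j | ℱ i]) ω < G i ω :=
  ae_lt_condExp_iff_of_condExp_mul (ℱ.le i) (hX j) (hG.integrable i) (hG.integrable j)
    (hG.integrable_mul (hX j) i) (hG.integrable_mul (hX j) j) (hG.stronglyAdapted i) (hX0 j)
    (hG.pos i) (fun ω => hG.antitone ω hij) (hG.martingale.condExp_ae_eq hij)

end Strictness

section TimeInterval

variable {Ω : Type*} {mΩ : MeasurableSpace Ω} {μ : Measure Ω} {ℱ : Filtration ℝ mΩ}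
  {X G M c : ℝ → Ω → ℝ} {r T : ℝ}

/-- The filtration `ℱ` observed only on `[0, T]`. -/
abbrev filtrationIcc (ℱ : Filtration ℝ mΩ) (T : ℝ) : Filtration (Set.Icc (0 : ℝ) T) mΩ :=
  reindexFiltration ℱ (Subtype.mono_coe (Set.Icc 0 T))

theorem martingaleOn_iff : MartingaleOn ℱ μ M T ↔
    Martingale (fun u : Set.Icc (0 : ℝ) T => M u) (filtrationIcc ℱ T) μ where
  mp h := ⟨fun u => (h.1 u u.2).1.stronglyMeasurable, fun u v huv => h.2 u v u.2.1 huv v.2.2⟩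
  mpr h := ⟨fun t ht => ⟨(h.1 ⟨t, ht⟩).measurable, h.integrable ⟨t, ht⟩⟩, fun s t hs hst ht =>
    h.2 ⟨s, hs, hst.trans ht⟩ ⟨t, hs.trans hst, ht⟩ hst⟩

theorem StrictSubmartingaleOn.submartingale [IsFiniteMeasure μ]
    (h : StrictSubmartingaleOn ℱ μ X T) :
    Submartingale (fun u : Set.Icc (0 : ℝ) T => X u) (filtrationIcc ℱ T) μ := by
  have hadapted (u : Set.Icc (0 : ℝ) T) : StronglyMeasurable[ℱ u] (X u) :=
    (h.1 u u.2).1.stronglyMeasurable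
  refine ⟨hadapted, fun u v huv => ?_, fun u => (h.1 u u.2).2⟩
  rcases huv.eq_or_lt with rfl | hlt
  · exact (Filter.EventuallyEq.of_eq
      (condExp_of_stronglyMeasurable (ℱ.le u) (hadapted u) (h.1 u u.2).2).symm).le
  · exact (h.2 u v u.2.1 hlt v.2.2).mono fun ω => le_of_lt

variable [Fact (0 ≤ T)]

theorem goodSurvival_iff : GoodSurvival ℱ μ c r T G ↔
    IsMulCompensator (fun (u : Set.Icc (0 : ℝ) T) ω => Real.exp (-(r * u)) * c u ω)
      (fun u : Set.Icc (0 : ℝ) T => G u) (filtrationIcc ℱ T) μ ∧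
    (∀ ω, Continuous fun u : Set.Icc (0 : ℝ) T => G u ω) ∧ StrictSupermartingaleOn ℱ μ G T where
  mp := fun ⟨hpos, hzero, hanti, hcont, hsuper, hmart⟩ =>
    ⟨⟨fun u => hpos u u.2, hzero, fun ω u v huv => hanti ω u.2 v.2 huv,
      fun u => (hsuper.1 u u.2).1.stronglyMeasurable, martingaleOn_iff.1 hmart⟩,
      fun ω => (hcont ω).domRestrict, hsuper⟩
  mpr := fun ⟨hG, hcont, hsuper⟩ =>
    ⟨fun t ht => hG.pos ⟨t, ht⟩, hG.bot_eq_one, fun ω s hs t ht hst =>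
      hG.antitone ω (show (⟨s, hs⟩ : Set.Icc (0 : ℝ) T) ≤ ⟨t, ht⟩ from hst),
      fun ω => continuousOn_iff_continuous_domRestrict.2 (hcont ω), hsuper,
      martingaleOn_iff.2 hG.martingale⟩

theorem strictSubmartingaleOn_iff_strictSupermartingaleOn [IsFiniteMeasure μ]
    (hX : ∀ t ∈ Set.Icc 0 T, Measurable[ℱ t] (X t) ∧ Integrable (X t) μ)
    (hX0 : ∀ t ∈ Set.Icc 0 T, ∀ ω, 0 < X t ω)
    (hG : IsMulCompensator (fun u : Set.Icc (0 : ℝ) T => X u) (fun u => G u)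
      (filtrationIcc ℱ T) μ) :
    StrictSubmartingaleOn ℱ μ X T ↔ StrictSupermartingaleOn ℱ μ G T := by
  have hG' : ∀ t ∈ Set.Icc 0 T, Measurable[ℱ t] (G t) ∧ Integrable (G t) μ := fun t ht =>
    ⟨(hG.stronglyAdapted ⟨t, ht⟩).measurable, hG.integrable ⟨t, ht⟩⟩
  have hiff (s t : ℝ) (hs : 0 ≤ s) (hst : s < t) (ht : t ≤ T) :=
    hG.ae_lt_condExp_iff (fun u => (hX u u.2).2) (fun u => hX0 u u.2)
      (show (⟨s, hs, hst.le.trans ht⟩ : Set.Icc (0 : ℝ) T) ≤ ⟨t, hs.trans hst.le, ht⟩ from hst.le)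
  exact ⟨fun h => ⟨hG', fun s t hs hst ht => (hiff s t hs hst ht).1 (h.2 s t hs hst ht)⟩,
    fun h => ⟨hX, fun s t hs hst ht => (hiff s t hs hst ht).2 (h.2 s t hs hst ht)⟩⟩

end TimeInterval

section Discounting

variable {Ω : Type*} {mΩ : MeasurableSpace Ω} {Q : Measure Ω} {T r : ℝ}
  {ℱ : Filtration ℝ mΩ} {c : ℝ → Ω → ℝ} {Y : Ω → ℝ}

theorem discounted_le (hcY : ∀ t ∈ Set.Icc 0 T, ∀ ω, c t ω ≤ Y ω)
    (hc_pos : ∀ t ∈ Set.Icc 0 T, ∀ ω, 0 < c t ω) {t : ℝ} (ht : t ∈ Set.Icc 0 T) (ω : Ω) :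
    Real.exp (-(r * t)) * c t ω ≤ Real.exp (|r| * T) * Y ω := by
  have hrt : -(r * t) ≤ |r| * T :=
    calc -(r * t) ≤ |r| * t := by
          rw [← neg_mul]
          exact mul_le_mul_of_nonneg_right (neg_le_abs r) ht.1
      _ ≤ |r| * T := mul_le_mul_of_nonneg_left ht.2 (abs_nonneg r)
  exact mul_le_mul (Real.exp_le_exp.2 hrt) (hcY t ht ω) (hc_pos t ht ω).le (Real.exp_pos _).le

theorem measurable_integrable_discounted (hc : ∀ t ∈ Set.Icc 0 T, Measurable[ℱ t] (c t))
    (hc_pos : ∀ t ∈ Set.Icc 0 T, ∀ ω, 0 < c t ω) (hcY : ∀ t ∈ Set.Icc 0 T, ∀ ω, c t ω ≤ Y ω)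
    (hY : Integrable Y Q) {t : ℝ} (ht : t ∈ Set.Icc 0 T) :
    Measurable[ℱ t] (fun ω => Real.exp (-(r * t)) * c t ω) ∧
      Integrable (fun ω => Real.exp (-(r * t)) * c t ω) Q := by
  refine ⟨(hc t ht).const_mul _, Integrable.const_mul ?_ _⟩
  refine hY.mono' ((hc t ht).mono (ℱ.le t) le_rfl).aestronglyMeasurable (ae_of_all _ fun ω => ?_)
  rw [Real.norm_of_nonneg (hc_pos t ht ω).le]
  exact hcY t ht ω

end Discounting

theorem stmt0_general {Ω : Type*} {mΩ : MeasurableSpace Ω} {Q : Measure Ω} [IsFiniteMeasure Q]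
    {T r : ℝ} (hT : 0 ≤ T) (ℱ : Filtration ℝ mΩ)
    (hnull : ∀ A, MeasurableSet A → Q A = 0 → MeasurableSet[ℱ 0] A) {c : ℝ → Ω → ℝ} {Y : Ω → ℝ}
    (hc : ∀ t ∈ Set.Icc 0 T, Measurable[ℱ t] (c t))
    (hc_cont : ∀ ω, ContinuousOn (fun t => c t ω) (Set.Icc 0 T))
    (hc_pos : ∀ t ∈ Set.Icc 0 T, ∀ ω, 0 < c t ω) (hcY : ∀ t ∈ Set.Icc 0 T, ∀ ω, c t ω ≤ Y ω)
    (hY : Integrable Y Q) :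
    (StrictSubmartingaleOn ℱ Q (fun t ω => Real.exp (-(r * t)) * c t ω) T ↔
      ∃ G : ℝ → Ω → ℝ, GoodSurvival ℱ Q c r T G) ∧
    (∀ G₁ G₂ : ℝ → Ω → ℝ, GoodSurvival ℱ Q c r T G₁ → GoodSurvival ℱ Q c r T G₂ →
      ∀ᵐ ω ∂Q, ∀ t ∈ Set.Icc (0 : ℝ) T, G₁ t ω = G₂ t ω) := by
  have : Fact (0 ≤ T) := ⟨hT⟩
  set X : ℝ → Ω → ℝ := fun t ω => Real.exp (-(r * t)) * c t ω
  have hX : ∀ t ∈ Set.Icc 0 T, Measurable[ℱ t] (X t) ∧ Integrable (X t) Q := fun t ht =>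
    measurable_integrable_discounted hc hc_pos hcY hY ht
  have hX0 : ∀ t ∈ Set.Icc 0 T, ∀ ω, 0 < X t ω := fun t ht ω =>
    mul_pos (Real.exp_pos _) (hc_pos t ht ω)
  have hXc (ω : Ω) : Continuous fun u : Set.Icc (0 : ℝ) T => X u ω :=
    continuousOn_iff_continuous_domRestrict.1
      ((by fun_prop : Continuous fun t : ℝ => Real.exp (-(r * t))).continuousOn.mul (hc_cont ω))
  have hXY (u : Set.Icc (0 : ℝ) T) (ω : Ω) : X u ω ≤ Real.exp (|r| * T) * Y ω :=
    discounted_le hcY hc_pos u.2 ω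
  refine ⟨⟨fun h => ?_, fun ⟨G, hGood⟩ => ?_⟩, fun G₁ G₂ h₁ h₂ => ?_⟩
  · obtain ⟨G, hG, hGc⟩ := exists_continuous_isMulCompensator h.submartingale
      (fun u => hX0 u u.2) hXc hXY (hY.const_mul _) hnull
    obtain ⟨G, rfl⟩ : ∃ H : ℝ → Ω → ℝ, (fun u : Set.Icc (0 : ℝ) T => H u) = G :=
      ⟨fun t => G (Set.projIcc 0 T hT t), funext fun u => congrArg G (Set.projIcc_val hT u)⟩
    exact ⟨G, goodSurvival_iff.2
      ⟨hG, hGc, (strictSubmartingaleOn_iff_strictSupermartingaleOn hX hX0 hG).1 h⟩⟩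
  · obtain ⟨hG, -, hsuper⟩ := goodSurvival_iff.1 hGood
    exact (strictSubmartingaleOn_iff_strictSupermartingaleOn hX hX0 hG).2 hsuper
  · obtain ⟨hG₁, hGc₁, -⟩ := goodSurvival_iff.1 h₁
    obtain ⟨hG₂, hGc₂, -⟩ := goodSurvival_iff.1 h₂
    filter_upwards [hG₁.ae_eq_of_continuous hG₂ hGc₁ hGc₂ (fun u => (hX u u.2).2)
      (fun u => hX0 u u.2) hXY (hY.const_mul _)] with ω hω t ht
    exact hω ⟨t, ht⟩

section BlackScholes

variable {Ω : Type*} [mΩ : MeasurableSpace Ω] {P : Measure Ω} {W : ℝ → Ω → ℝ}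

/-- The natural filtration of `W` augmented by the `P`-null sets. -/
def augmentedFiltration (P : Measure Ω) (hW : ∀ t, Measurable (W t)) : Filtration ℝ mΩ where
  seq t := natFilt W t ⊔ sigmaNull P
  mono' _ _ hst := sup_le_sup_right (biSup_mono fun _ hu => ⟨hu.1, hu.2.trans hst⟩) _
  le' _ := sup_le (iSup₂_le fun u _ => (hW u).comap_le)
    (MeasurableSpace.generateFrom_le fun _ hA => hA.1)

theorem measurableSet_augmentedFiltration_of_null (hW : ∀ t, Measurable (W t)) {f : Ω → ℝ}
    (hf : Measurable f) {A : Set Ω} (hA : MeasurableSet A)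
    (hA0 : P.withDensity (fun ω => ENNReal.ofReal (Real.exp (f ω))) A = 0) (t : ℝ) :
    MeasurableSet[augmentedFiltration P hW t] A := by
  have hac : P ≪ P.withDensity fun ω => ENNReal.ofReal (Real.exp (f ω)) :=
    withDensity_absolutelyContinuous' (by fun_prop) (ae_of_all _ fun ω =>
      (ENNReal.ofReal_pos.2 (Real.exp_pos _)).ne')
  exact (le_sup_right : sigmaNull P ≤ natFilt W t ⊔ sigmaNull P) A
    (MeasurableSpace.measurableSet_generateFrom ⟨hA, hac hA0⟩)

theorem IsStdBM.isFiniteMeasure_withDensity_exp (hW : IsStdBM P W) {t : ℝ} (ht : 0 ≤ t)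
    (θ b : ℝ) : IsFiniteMeasure
      (P.withDensity fun ω => ENNReal.ofReal (Real.exp (-(θ * W t ω) - b))) := by
  have hmap : Measure.map (W t) P = gaussianReal 0 (t - 0).toNNReal := by
    simpa only [hW.2.1, sub_zero] using hW.2.2.2.1 0 t le_rfl ht
  have hexp : Integrable (fun ω => Real.exp (-θ * W t ω)) P := by
    have h := integrable_exp_mul_gaussianReal (μ := 0) (v := (t - 0).toNNReal) (-θ)
    rw [← hmap] at h
    exact h.comp_measurable (hW.1 t)
  refine isFiniteMeasure_withDensity_ofReal (Integrable.hasFiniteIntegral ?_)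
  simpa only [neg_mul, Real.exp_sub, div_eq_mul_inv] using hexp.mul_const (Real.exp b)⁻¹

end BlackScholes

/-- In the Black–Scholes setting, with `(F_t)` the augmented Brownian
filtration and `Q_BS` the risk-neutral measure (given by its density with respect to
`P`, with `θ = (μ − r)/σ`), for a pre-default value process `c` the following are
equivalent: (1) `(e^{-rt}c(t))_{t∈[0,T]}` is a strict `(F_t)`-submartingale under
`Q_BS`; (2) there exists a strictly positive process `G` with `G(0)=1`, non-increasing
continuous paths, which is a strict `(F_t)`-supermartingale under `Q_BS` and such that
`(e^{-rt}c(t)G(t))_{t∈[0,T]}` is an `(F_t)`-martingale under `Q_BS`.  Moreover such a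
`G`, if it exists, is unique up to indistinguishability. -/
theorem stmt0 {Ω : Type*} [mΩ : MeasurableSpace Ω] (P : Measure Ω)
    [IsProbabilityMeasure P] (W : ℝ → Ω → ℝ) (hW : IsStdBM P W)
    (T r σ' μ' S0 : ℝ) (hT : 0 < T) (hr : 0 ≤ r) (hσ : 0 < σ') (hS0 : 0 < S0)
    (F : ℝ → MeasurableSpace Ω) (hF : ∀ t : ℝ, F t = natFilt W t ⊔ sigmaNull P)
    (Q_BS : Measure Ω)
    (hQBS : Q_BS = P.withDensity (fun ω => ENNReal.ofReal
      (Real.exp (-(((μ' - r) / σ') * W T ω) - ((μ' - r) / σ') ^ 2 * T / 2))))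
    (c : ℝ → Ω → ℝ)
    (hc_adapted : ∀ t ∈ Set.Icc (0 : ℝ) T, Measurable[F t] (c t))
    (hc_cont : ∀ ω, ContinuousOn (fun t => c t ω) (Set.Icc (0 : ℝ) T))
    (hc_mem : ∀ t : ℝ, 0 ≤ t → t < T → ∀ ω, c t ω ∈ Set.Ioo (0 : ℝ) 1)
    (hc_T : ∀ ω, c T ω = 1) :
    (StrictSubmartingaleOn F Q_BS (fun t ω => Real.exp (-(r * t)) * c t ω) T ↔
      ∃ G : ℝ → Ω → ℝ, GoodSurvival F Q_BS c r T G) ∧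
    (∀ G₁ G₂ : ℝ → Ω → ℝ, GoodSurvival F Q_BS c r T G₁ → GoodSurvival F Q_BS c r T G₂ →
      ∀ᵐ ω ∂Q_BS, ∀ t ∈ Set.Icc (0 : ℝ) T, G₁ t ω = G₂ t ω) := by
  obtain rfl : F = augmentedFiltration P hW.1 := funext hF
  subst hQBS
  have := hW.isFiniteMeasure_withDensity_exp hT.le ((μ' - r) / σ') (((μ' - r) / σ') ^ 2 * T / 2)
  have hc01 : ∀ t ∈ Set.Icc 0 T, ∀ ω, c t ω ∈ Set.Ioc (0 : ℝ) 1 := fun t ht ω => by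
    rcases ht.2.eq_or_lt with rfl | htT
    · rw [hc_T]
      exact Set.right_mem_Ioc.2 one_pos
    · exact Set.Ioo_subset_Ioc_self (hc_mem t ht.1 htT ω)
  exact stmt0_general hT.le _ (fun A hA hA0 => measurableSet_augmentedFiltration_of_null hW.1
      (((hW.1 T).const_mul _).neg.sub_const _) hA hA0 0) hc_adapted hc_cont
    (fun t ht ω => (hc01 t ht ω).1) (fun t ht ω => (hc01 t ht ω).2) (integrable_const 1)
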